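/- (Upper bound of mixing time of LMC, Theorem 4) Let f : ℝ^d → ℝ be three times continuously differentiable with m·I ≼ ∇²f(x) ≼ L·I for all x (0 < m ≤ L), κ = L/m, ∇f(0) = 0, and ‖∇(Δf)(x)‖ ≤ G(1+‖x‖) for all x for some G > 0. Let μ be the probability measure on ℝ^d with density proportional to exp(−f), assumed to have finite second moment, and let C_LMC = (10(L² + G)/m^{3/2}) · √(2d + m(E‖x₀‖² + 1)). For any accuracy ε with 0 < ε < 2 W₂(Law(x₀), μ), there exists a step size h with 0 < h ≤ 1/(4κL) such that the LMC iterates (x̄_k) with step size h started from a square-integrable x₀ satisfy W₂(Law(x̄_k), μ) ≤ ε for some k with k ≤ max{4κ², 2C_LMC/(mε)} · log(2 W₂(Law(x₀), μ)/ε); in other words, the ε-mixing time of LMC in W₂ is at most max{4κ², 2C_LMC/(mε)} · log(2 W₂(Law(x₀), μ)/ε). -/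

import Mathlib

open MeasureTheory ProbabilityTheory Real
open scoped ENNReal NNReal

noncomputable section

/-- `ℝ^d` with the Euclidean structure. -/
abbrev Euc (d : ℕ) := EuclideanSpace ℝ (Fin d)

/-- The standard Gaussian measure `N(0, I_d)` on `ℝ^d`. -/
noncomputable def stdGaussian (d : ℕ) : Measure (Euc d) :=
  (Measure.pi fun _ : Fin d => gaussianReal 0 1).map (EuclideanSpace.equiv (Fin d) ℝ).symm

/-- The centered Gaussian measure on `ℝ^d` with covariance `σ2 • I_d`. -/
noncomputable def isoGaussian (d : ℕ) (σ2 : ℝ) : Measure (Euc d) :=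
  (stdGaussian d).map fun x => Real.sqrt σ2 • x

/-- `B` is a standard `d`-dimensional Brownian motion with respect to the filtration `ℱ`
under the probability measure `P`. -/
structure IsStdBrownian {d : ℕ} {Ω : Type*} {mΩ : MeasurableSpace Ω} (P : Measure Ω)
    (ℱ : Filtration ℝ mΩ) (B : ℝ → Ω → Euc d) : Prop where
  init : ∀ ω, B 0 ω = 0
  cont : ∀ ω, Continuous fun t => B t ω
  adapted : StronglyAdapted ℱ B
  incr_law : ∀ s t : ℝ, 0 ≤ s → s ≤ t →
    P.map (fun ω => B t ω - B s ω) = isoGaussian d (t - s)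
  incr_indep : ∀ s t : ℝ, 0 ≤ s → s ≤ t →
    Indep (MeasurableSpace.comap (fun ω => B t ω - B s ω) inferInstance) (ℱ s) P

/-- `X` is a (pathwise) solution of the overdamped Langevin dynamics
`dX_t = -∇f(X_t) dt + √2 dB_t`: a continuous adapted process satisfying the integral
equation `X_t = X_0 - ∫₀ᵗ ∇f(X_s) ds + √2 B_t` for all `t ≥ 0`. -/
structure IsLangevinSolution {d : ℕ} {Ω : Type*} {mΩ : MeasurableSpace Ω}
    (ℱ : Filtration ℝ mΩ) (f : Euc d → ℝ) (B : ℝ → Ω → Euc d) (X : ℝ → Ω → Euc d) : Prop where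
  cont : ∀ ω, Continuous fun t => X t ω
  adapted : StronglyAdapted ℱ X
  eqn : ∀ ω, ∀ t : ℝ, 0 ≤ t →
    X t ω = X 0 ω - (∫ s in (0:ℝ)..t, gradient f (X s ω)) + Real.sqrt 2 • B t ω

/-- The Hessian bounds `m • I ≼ ∇²f(x) ≼ L • I` for all `x`, expressed through the second
iterated Fréchet derivative: `m ‖v‖² ≤ ⟨v, ∇²f(x) v⟩ ≤ L ‖v‖²`. -/
def HessianBounds {d : ℕ} (m L : ℝ) (f : Euc d → ℝ) : Prop :=
  ∀ x v : Euc d, m * ‖v‖ ^ 2 ≤ iteratedFDeriv ℝ 2 f x ![v, v] ∧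
    iteratedFDeriv ℝ 2 f x ![v, v] ≤ L * ‖v‖ ^ 2


/-- The 2-Wasserstein distance:
`W₂(μ, ν) = inf over couplings γ of (∫ ‖x - y‖² dγ)^{1/2}`, where a coupling of `μ` and `ν`
is a probability measure on the product space whose marginals are `μ` and `ν`. -/
noncomputable def W2 {α : Type*} [MeasurableSpace α] [NormedAddCommGroup α]
    (μ ν : Measure α) : ℝ :=
  Real.sqrt (ENNReal.toReal
    (⨅ γ ∈ {γ : Measure (α × α) |
        IsProbabilityMeasure γ ∧ γ.map Prod.fst = μ ∧ γ.map Prod.snd = ν},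
      ∫⁻ p, (‖p.1 - p.2‖₊ : ℝ≥0∞) ^ 2 ∂γ))

/-- `μ` is the probability measure with density proportional to `exp (-f)` with respect to
Lebesgue measure. -/
def IsGibbs {d : ℕ} (f : Euc d → ℝ) (μ : Measure (Euc d)) : Prop :=
  IsProbabilityMeasure μ ∧ ∃ c : ℝ≥0∞, c ≠ 0 ∧ c ≠ ⊤ ∧
    μ = c • (volume : Measure (Euc d)).withDensity fun x => ENNReal.ofReal (Real.exp (-f x))


/-- The Laplacian of `f : ℝ^d → ℝ`, i.e. the trace of its Hessian. -/
noncomputable def lapl {d : ℕ} (f : Euc d → ℝ) (x : Euc d) : ℝ :=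
  ∑ i : Fin d,
    iteratedFDeriv ℝ 2 f x ![EuclideanSpace.single i (1:ℝ), EuclideanSpace.single i (1:ℝ)]

/-!
The chain with step `h` is compared with the chain with step `h / 2 ^ n`, as `n → ∞`.

Halving the step replaces one step driven by the noise `(ξ + ξ') / √2` by two half steps driven by
`ξ` and `ξ'`. In this coupling the local error has a fluctuation of order `h ^ (3 / 2)`, whose
contributions are centred and add up in quadrature, and a conditional mean of order `h ^ 2`: the
Gaussian average `𝔼 ∇f (z + √h ξ)` solves the heat equation in `h`, so its distance to `∇f z` is
controlled by `h` times the growth of `∇Δf`. Since a step contracts distances by `1 - m * h`, each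
halving costs `O(h)` uniformly in time, and the geometric series over all the halvings is `O(h)`.

On the other side, for a small step `η` one transition moves `μ` by only `o(η)` in `W₂`: the
Metropolis-adjusted chain is reversible for `μ`, and its rejection probability is the error of the
trapezoidal rule for `f` along a proposal. By contraction the chain with step `h / 2 ^ n` therefore
follows `μ` up to `exp (-m * h * k) * W₂` and an error that vanishes as `n → ∞`.
-/

open scoped Gradient Laplacian RealInnerProductSpace

/-! ### The standard Gaussian measure -/

lemma stdGaussian_eq_stdGaussian_euclideanSpace (d : ℕ) :
    stdGaussian d = stdGaussian (Euc d) :=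
  map_pi_eq_stdGaussian

lemma memLp_two_of_lipschitzWith {E V : Type*} [NormedAddCommGroup E] [MeasurableSpace E]
    [NormedAddCommGroup V] {μ : Measure E} [IsFiniteMeasure μ] (hμ : MemLp id 2 μ)
    {K : ℝ≥0} {F : E → V} (hF : LipschitzWith K F) : MemLp F 2 μ := by
  have hF0 : MemLp (fun x ↦ F x - F 0) 2 μ :=
    (hF.sub (LipschitzWith.const (F 0))).comp_memLp (by simp) hμ
  convert hF0.add (memLp_const (F 0)) using 1
  ext x
  simp

section Gaussian

variable {E : Type*} [NormedAddCommGroup E] [InnerProductSpace ℝ E]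

/-- The density of the standard Gaussian measure with respect to the volume. -/
def stdGaussianPDFReal (x : E) : ℝ :=
  ((2 * π) ^ (Module.finrank ℝ E / 2 : ℝ))⁻¹ * exp (-(‖x‖ ^ 2 / 2))

lemma stdGaussianPDFReal_pos (x : E) : 0 < stdGaussianPDFReal x := by
  unfold stdGaussianPDFReal
  positivity

lemma continuous_stdGaussianPDFReal : Continuous (stdGaussianPDFReal (E := E)) := by
  unfold stdGaussianPDFReal
  fun_prop

variable [FiniteDimensional ℝ E]

lemma hasGradientAt_stdGaussianPDFReal (x : E) :
    HasGradientAt stdGaussianPDFReal (-(stdGaussianPDFReal x • x)) x := by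
  have hsq : HasFDerivAt (fun y : E ↦ ‖y‖ ^ 2 / 2) (innerSL ℝ x) x := by
    simp_rw [div_eq_inv_mul]
    refine ((hasStrictFDerivAt_norm_sq x).hasFDerivAt.const_mul (2⁻¹ : ℝ)).congr_fderiv ?_
    ext v
    simp
  refine (hsq.neg.exp.const_mul ((2 * π) ^ (Module.finrank ℝ E / 2 : ℝ))⁻¹).congr_fderiv ?_
  ext v
  simp [stdGaussianPDFReal]
  ring

variable [MeasurableSpace E] [BorelSpace E]

lemma map_add_stdGaussian_prod :
    ((stdGaussian E).prod (stdGaussian E)).map (fun p ↦ p.1 + p.2) =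
      (stdGaussian E).map (√2 • ·) := by
  change Measure.conv (stdGaussian E) (stdGaussian E) = _
  have : IsProbabilityMeasure ((stdGaussian E).map (√2 • ·)) :=
    Measure.isProbabilityMeasure_map (by fun_prop)
  refine Measure.ext_of_charFun (funext fun t ↦ ?_)
  have hsq : ((‖√2‖ * ‖t‖ : ℝ) : ℂ) ^ 2 = 2 * (‖t‖ : ℂ) ^ 2 := by
    norm_cast
    rw [mul_pow, norm_eq_abs, sq_abs, sq_sqrt zero_le_two]
  rw [charFun_conv, charFun_map_smul, charFun_stdGaussian, charFun_stdGaussian, ← Complex.exp_add,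
    norm_smul, hsq]
  congr 1
  ring

lemma integrable_norm_sq_stdGaussian : Integrable (fun x : E ↦ ‖x‖ ^ 2) (stdGaussian E) :=
  (IsGaussian.memLp_id (stdGaussian E) 2 (by simp)).integrable_norm_pow two_ne_zero

lemma integral_norm_sq_stdGaussian :
    ∫ x, ‖x‖ ^ 2 ∂stdGaussian E = Module.finrank ℝ E := by
  set b := stdOrthonormalBasis ℝ E
  have hcoord (i) : ∫ x, ⟪b i, x⟫ ^ 2 ∂stdGaussian E = 1 := by
    have hvar := variance_dual_stdGaussian (innerSL ℝ (b i))
    rwa [variance_of_integral_eq_zero (by fun_prop) (integral_strongDual_stdGaussian _),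
      innerSL_apply_norm, b.norm_eq_one, one_pow] at hvar
  have hint (i) : Integrable (fun x : E ↦ ⟪b i, x⟫ ^ 2) (stdGaussian E) :=
    ((innerSL ℝ (b i)).comp_memLp' (IsGaussian.memLp_id _ 2 (by simp))).integrable_sq
  simp_rw [← b.sum_sq_inner_right]
  rw [integral_finsetSum _ fun i _ ↦ hint i]
  simp [hcoord]

lemma integral_norm_stdGaussian_le :
    ∫ x, ‖x‖ ∂stdGaussian E ≤ √(Module.finrank ℝ E) := by
  have hL2 : MemLp (fun x : E ↦ ‖x‖) 2 (stdGaussian E) := IsGaussian.memLp_two_id.norm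
  have hvar := variance_nonneg (fun x : E ↦ ‖x‖) (stdGaussian E)
  rw [variance_eq_sub hL2, sub_nonneg] at hvar
  exact le_sqrt_of_sq_le (hvar.trans integral_norm_sq_stdGaussian.le)

lemma integrable_stdGaussianPDFReal : Integrable (stdGaussianPDFReal (E := E)) := by
  have hexp : Integrable fun x : E ↦ exp (-(1 / 2) * ‖x‖ ^ 2) := by
    refine .of_integral_ne_zero ?_
    rw [GaussianFourier.integral_rexp_neg_mul_sq_norm one_half_pos]
    positivity
  convert hexp.const_mul ((2 * π) ^ (Module.finrank ℝ E / 2 : ℝ))⁻¹ using 2 with x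
  rw [stdGaussianPDFReal]
  ring_nf

lemma stdGaussian_eq_withDensity :
    stdGaussian E = volume.withDensity fun x ↦ ENNReal.ofReal (stdGaussianPDFReal x) := by
  have : IsFiniteMeasure (volume.withDensity fun x : E ↦ ENNReal.ofReal (stdGaussianPDFReal x)) :=
    isFiniteMeasure_withDensity_ofReal integrable_stdGaussianPDFReal.2
  refine Measure.ext_of_charFun (funext fun t ↦ ?_)
  set c : ℝ := (2 * π) ^ (Module.finrank ℝ E / 2 : ℝ) with hc
  have hc0 : (c : ℂ) ≠ 0 := by
    norm_cast
    positivity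
  have hintegrand (x : E) : (ENNReal.ofReal (stdGaussianPDFReal x)).toReal •
      Complex.exp (⟪x, t⟫ * Complex.I) =
        (c : ℂ)⁻¹ * Complex.exp (-(1 / 2) * (‖x‖ : ℂ) ^ 2 + Complex.I * (⟪t, x⟫ : ℝ)) := by
    rw [ENNReal.toReal_ofReal (stdGaussianPDFReal_pos x).le, Complex.exp_add, stdGaussianPDFReal,
      real_inner_comm, Complex.real_smul]
    push_cast
    rw [mul_assoc]
    congr 3 <;> ring_nf
  have hconst : (π / (1 / 2) : ℂ) ^ ((Module.finrank ℝ E : ℂ) / 2) = c := by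
    rw [hc, Complex.ofReal_cpow (by positivity)]
    push_cast
    congr 1
    ring
  rw [charFun_stdGaussian, charFun_apply, integral_withDensity_eq_integral_toReal_smul
    continuous_stdGaussianPDFReal.measurable.ennreal_ofReal (by simp)]
  simp_rw [hintegrand]
  rw [integral_const_mul, GaussianFourier.integral_cexp_neg_mul_sq_norm_add (by norm_num),
    hconst, inv_mul_cancel_left₀ hc0, Complex.I_sq]
  congr 1
  ring

lemma integral_stdGaussian_eq_integral_mul (F : E → ℝ) :
    ∫ x, F x ∂stdGaussian E = ∫ x, F x * stdGaussianPDFReal x := by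
  rw [stdGaussian_eq_withDensity, integral_withDensity_eq_integral_toReal_smul
    continuous_stdGaussianPDFReal.measurable.ennreal_ofReal (by simp)]
  simp [ENNReal.toReal_ofReal (stdGaussianPDFReal_pos _).le, mul_comm]

lemma integrable_stdGaussian_iff {F : E → ℝ} :
    Integrable F (stdGaussian E) ↔ Integrable fun x ↦ F x * stdGaussianPDFReal x := by
  rw [stdGaussian_eq_withDensity, integrable_withDensity_iff
    continuous_stdGaussianPDFReal.measurable.ennreal_ofReal (by simp)]
  simp [ENNReal.toReal_ofReal (stdGaussianPDFReal_pos _).le]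

/-- Stein's identity. -/
lemma integral_mul_inner_stdGaussian {F : E → ℝ} {K : ℝ≥0} (hF : Differentiable ℝ F)
    (hK : LipschitzWith K F) (v : E) :
    ∫ x, F x * ⟪x, v⟫ ∂stdGaussian E = ∫ x, fderiv ℝ F x v ∂stdGaussian E := by
  have hid : MemLp id 2 (stdGaussian E) := IsGaussian.memLp_two_id
  have hFL2 : MemLp F 2 (stdGaussian E) := memLp_two_of_lipschitzWith hid hK
  have hFinner : Integrable (fun x ↦ F x * ⟪x, v⟫) (stdGaussian E) :=
    hFL2.integrable_mul (hid.inner_const v)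
  have hfderiv : Integrable (fun x ↦ fderiv ℝ F x v) (stdGaussian E) :=
    .of_bound (measurable_fderiv_apply_const ℝ F v).aestronglyMeasurable (K * ‖v‖)
      (.of_forall fun x ↦ (fderiv ℝ F x).le_of_opNorm_le (norm_fderiv_le_of_lipschitz ℝ hK) v)
  have hpdf (x : E) :
      F x * fderiv ℝ stdGaussianPDFReal x v = -(F x * ⟪x, v⟫ * stdGaussianPDFReal x) := by
    rw [(hasGradientAt_stdGaussianPDFReal x).fderiv_apply, inner_neg_left, real_inner_smul_left]
    ring
  have hparts := integral_mul_fderiv_eq_neg_fderiv_mul_of_integrable (μ := volume)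
    (integrable_stdGaussian_iff.1 hfderiv)
    ((integrable_stdGaussian_iff.1 hFinner).neg.congr (.of_forall fun x ↦ (hpdf x).symm))
    (integrable_stdGaussian_iff.1 (hFL2.integrable one_le_two)) (fun x _ ↦ hF x)
    (fun x _ ↦ (hasGradientAt_stdGaussianPDFReal x).differentiableAt)
  simp_rw [hpdf, integral_neg, neg_inj] at hparts
  rw [integral_stdGaussian_eq_integral_mul, integral_stdGaussian_eq_integral_mul, hparts]

end Gaussian

/-! ### Calculus of functions with Lipschitz gradient -/

section Gradient

open InnerProductSpace

variable {E : Type*} [NormedAddCommGroup E] [InnerProductSpace ℝ E]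

lemma norm_add_smul_le (z ξ : E) (s : ℝ) : ‖z + s • ξ‖ ≤ ‖z‖ + |s| * ‖ξ‖ :=
  (norm_add_le _ _).trans_eq (by rw [norm_smul, norm_eq_abs])

lemma lipschitzWith_add_smul (z : E) (s : ℝ) : LipschitzWith ‖s‖₊ fun ξ : E ↦ z + s • ξ :=
  .of_dist_le_mul fun x y ↦ by simp [dist_smul₀]

lemma norm_apply_add_smul_le {V : Type*} [NormedAddCommGroup V] {F : E → V} {K : ℝ≥0}
    (hK : LipschitzWith K F) (z ξ : E) (s : ℝ) :
    ‖F (z + s • ξ)‖ ≤ ‖F z‖ + K * (|s| * ‖ξ‖) := by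
  have hdist := hK.dist_le_mul (z + s • ξ) z
  rw [dist_eq_norm, dist_eq_norm, add_sub_cancel_left, norm_smul, norm_eq_abs] at hdist
  linarith [norm_le_norm_add_norm_sub' (F (z + s • ξ)) (F z)]

variable [CompleteSpace E] {f : E → ℝ}

lemma norm_gradient (f : E → ℝ) (x : E) : ‖∇ f x‖ = ‖fderiv ℝ f x‖ := by
  rw [gradient, LinearIsometryEquiv.norm_map]

lemma abs_sub_le_of_norm_gradient_le {C : ℝ} {x v : E} (hf : Differentiable ℝ f)
    (hC : ∀ z, ‖z - x‖ ≤ ‖v‖ → ‖∇ f z‖ ≤ C) : |f (x + v) - f x| ≤ C * ‖v‖ := by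
  have hmean := (convex_segment x (x + v)).norm_image_sub_le_of_norm_fderiv_le
    (fun z _ ↦ hf z) (fun z hz ↦ (norm_gradient f z).symm.trans_le (hC z ?_))
    (left_mem_segment ℝ x (x + v)) (right_mem_segment ℝ x (x + v))
  · simpa using hmean
  · simpa using norm_sub_le_of_mem_segment hz

lemma abs_sub_le_of_norm_gradient_le_one_add_norm {G : ℝ} (hf : Differentiable ℝ f)
    (hG : ∀ x, ‖∇ f x‖ ≤ G * (1 + ‖x‖)) (hG0 : 0 ≤ G) (x v : E) :
    |f (x + v) - f x| ≤ G * (1 + ‖x‖ + ‖v‖) * ‖v‖ :=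
  abs_sub_le_of_norm_gradient_le hf fun z hz ↦
    (hG z).trans (mul_le_mul_of_nonneg_left (by linarith [norm_le_norm_add_norm_sub' z x]) hG0)

lemma abs_sub_sub_inner_gradient_le {K : ℝ≥0} (hf : Differentiable ℝ f)
    (hK : LipschitzWith K (∇ f)) (x v : E) :
    |f (x + v) - f x - ⟪∇ f x, v⟫| ≤ K * ‖v‖ ^ 2 := by
  have hgrad (z : E) : HasGradientAt (fun z ↦ f z - ⟪∇ f x, z⟫) (∇ f z - ∇ f x) z := by
    have hlin : HasFDerivAt (fun z ↦ ⟪∇ f x, z⟫) (innerSL ℝ (∇ f x)) z :=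
      (innerSL ℝ (∇ f x)).hasFDerivAt
    refine ((hf z).hasGradientAt.hasFDerivAt.sub hlin).congr_fderiv ?_
    ext v
    simp
  have hmean := abs_sub_le_of_norm_gradient_le (C := K * ‖v‖) (x := x) (v := v)
    (fun z ↦ (hgrad z).differentiableAt) fun z hz ↦ by
      rw [(hgrad z).gradient]
      exact (hK.norm_sub_le z x).trans (by gcongr)
  calc |f (x + v) - f x - ⟪∇ f x, v⟫|
      = |f (x + v) - ⟪∇ f x, x + v⟫ - (f x - ⟪∇ f x, x⟫)| := by
        rw [inner_add_right]
        ring_nf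
    _ ≤ K * ‖v‖ ^ 2 := hmean.trans_eq (by ring)

lemma contDiff_gradient {n : WithTop ℕ∞} (hf : ContDiff ℝ (n + 1) f) : ContDiff ℝ n (∇ f) :=
  (toDual ℝ E).symm.toContinuousLinearEquiv.contDiff.comp (hf.fderiv_right le_rfl)

lemma inner_fderiv_gradient {x : E} (hf : ContDiffAt ℝ 2 f x) (v w : E) :
    ⟪fderiv ℝ (∇ f) x v, w⟫ = iteratedFDeriv ℝ 2 f x ![v, w] := by
  have hderiv : DifferentiableAt ℝ (fderiv ℝ f) x :=
    (hf.fderiv_right (m := 1) le_rfl).differentiableAt one_ne_zero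
  have hgrad : DifferentiableAt ℝ (∇ f) x :=
    (toDual ℝ E).symm.toContinuousLinearEquiv.differentiableAt.comp x hderiv
  calc ⟪fderiv ℝ (∇ f) x v, w⟫ = fderiv ℝ (fun y ↦ ⟪∇ f y, w⟫) x v := by
        rw [fderiv_inner_apply ℝ hgrad (differentiableAt_const w)]
        simp
    _ = fderiv ℝ (fun y ↦ fderiv ℝ f y w) x v := by simp_rw [inner_gradient_left]
    _ = iteratedFDeriv ℝ 2 f x ![v, w] := by
        rw [fderiv_clm_apply hderiv (differentiableAt_const w), iteratedFDeriv_two_apply]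
        simp

lemma isSymmetric_fderiv_gradient {x : E} (hf : ContDiffAt ℝ 2 f x) :
    (fderiv ℝ (∇ f) x).IsSymmetric := fun v w ↦ by
  rw [ContinuousLinearMap.coe_coe, real_inner_comm _ v, inner_fderiv_gradient hf,
    inner_fderiv_gradient hf, iteratedFDeriv_two_apply, iteratedFDeriv_two_apply]
  exact hf.isSymmSndFDerivAt (by simp) v w

lemma laplacian_eq_trace_fderiv_gradient [FiniteDimensional ℝ E] {x : E}
    (hf : ContDiffAt ℝ 2 f x) : Δ f x = LinearMap.trace ℝ E (fderiv ℝ (∇ f) x) := by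
  set b := stdOrthonormalBasis ℝ E
  rw [laplacian_eq_iteratedFDeriv_orthonormalBasis f b, LinearMap.trace_eq_sum_inner _ b]
  exact Finset.sum_congr rfl fun i _ ↦ by
    rw [real_inner_comm, ContinuousLinearMap.coe_coe, inner_fderiv_gradient hf]

end Gradient

lemma laplacian_eq_lapl {d : ℕ} (f : Euc d → ℝ) : Δ f = lapl f := by
  rw [InnerProductSpace.laplacian_eq_iteratedFDeriv_orthonormalBasis f
    (EuclideanSpace.basisFun (Fin d) ℝ)]
  ext x
  simp [lapl]

section QuadraticForm

variable {E : Type*} [NormedAddCommGroup E] [InnerProductSpace ℝ E]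

lemma norm_le_of_abs_inner_apply_self_le {T : E →L[ℝ] E} (hT : T.IsSymmetric) {C : ℝ}
    (hC : 0 ≤ C) (h : ∀ v, |⟪T v, v⟫| ≤ C * ‖v‖ ^ 2) : ‖T‖ ≤ C := by
  rw [T.norm_eq_iSup_rayleighQuotient hT]
  refine ciSup_le fun v ↦ ?_
  rw [ContinuousLinearMap.rayleighQuotient, abs_div, abs_of_nonneg (sq_nonneg ‖v‖)]
  exact div_le_of_le_mul₀ (sq_nonneg _) hC (h v)

lemma norm_id_sub_smul_le {T : E →L[ℝ] E} (hT : T.IsSymmetric) {m L h : ℝ} (hmL : m ≤ L)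
    (hlow : ∀ v, m * ‖v‖ ^ 2 ≤ ⟪T v, v⟫) (hupp : ∀ v, ⟪T v, v⟫ ≤ L * ‖v‖ ^ 2)
    (h0 : 0 ≤ h) (hhL : h * L ≤ 1) :
    ‖ContinuousLinearMap.id ℝ E - h • T‖ ≤ 1 - m * h := by
  have hmh : m * h ≤ 1 := by nlinarith
  refine norm_le_of_abs_inner_apply_self_le (fun v w ↦ ?_) (by linarith) fun v ↦ ?_
  · have hsymm : ⟪T v, w⟫ = ⟪v, T w⟫ := hT v w
    simp [inner_sub_left, inner_sub_right, real_inner_smul_left, real_inner_smul_right, hsymm]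
  · have hhlow := mul_le_mul_of_nonneg_left (hlow v) h0
    have hhupp := mul_le_mul_of_nonneg_left (hupp v) h0
    have hvsq := mul_le_mul_of_nonneg_right hhL (sq_nonneg ‖v‖)
    simp only [sub_apply, smul_apply, inner_sub_left,
      real_inner_smul_left, ContinuousLinearMap.id_apply, real_inner_self_eq_norm_sq]
    rw [abs_le]
    constructor <;> linarith

end QuadraticForm

namespace HessianBounds

variable {d : ℕ} {f : Euc d → ℝ} {m L : ℝ}

lemma inner_fderiv_gradient_self (hHess : HessianBounds m L f) (hf : ContDiff ℝ 2 f)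
    (x v : Euc d) :
    m * ‖v‖ ^ 2 ≤ ⟪fderiv ℝ (∇ f) x v, v⟫ ∧ ⟪fderiv ℝ (∇ f) x v, v⟫ ≤ L * ‖v‖ ^ 2 := by
  rw [inner_fderiv_gradient hf.contDiffAt]
  exact hHess x v

lemma lipschitzWith_gradient (hHess : HessianBounds m L f) (hf : ContDiff ℝ 2 f) (hm : 0 ≤ m)
    (hmL : m ≤ L) : LipschitzWith L.toNNReal (∇ f) := by
  have hL : 0 ≤ L := hm.trans hmL
  refine lipschitzWith_of_nnnorm_fderiv_le
    ((contDiff_gradient (n := 1) hf).differentiable one_ne_zero) fun x ↦ ?_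
  rw [← NNReal.coe_le_coe, coe_nnnorm, coe_toNNReal L hL]
  refine norm_le_of_abs_inner_apply_self_le (isSymmetric_fderiv_gradient hf.contDiffAt) hL
    fun v ↦ ?_
  obtain ⟨hlow, hupp⟩ := hHess.inner_fderiv_gradient_self hf x v
  exact abs_le.2 ⟨by nlinarith [sq_nonneg ‖v‖], hupp⟩

lemma norm_gradientStep_sub_le (hHess : HessianBounds m L f) (hf : ContDiff ℝ 2 f)
    (hmL : m ≤ L) {h : ℝ} (h0 : 0 ≤ h) (hhL : h * L ≤ 1) (x y : Euc d) :
    ‖(x - h • ∇ f x) - (y - h • ∇ f y)‖ ≤ (1 - m * h) * ‖x - y‖ := by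
  have hdiff : Differentiable ℝ (∇ f) :=
    (contDiff_gradient (n := 1) hf).differentiable one_ne_zero
  refine convex_univ.norm_image_sub_le_of_norm_hasFDerivWithin_le (𝕜 := ℝ)
    (f := fun z ↦ z - h • ∇ f z)
    (f' := fun z ↦ ContinuousLinearMap.id ℝ (Euc d) - h • fderiv ℝ (∇ f) z)
    (fun z _ ↦ ((hasFDerivAt_id z).sub ((hdiff z).hasFDerivAt.const_smul h)).hasFDerivWithinAt)
    (fun z _ ↦ ?_) (Set.mem_univ y) (Set.mem_univ x)
  exact norm_id_sub_smul_le (isSymmetric_fderiv_gradient hf.contDiffAt) hmL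
    (fun v ↦ (hHess.inner_fderiv_gradient_self hf z v).1)
    (fun v ↦ (hHess.inner_fderiv_gradient_self hf z v).2) h0 hhL

end HessianBounds

/-! ### Gaussian smoothing -/

section GaussianSmoothing

open InnerProductSpace

variable {E : Type*} [NormedAddCommGroup E] [InnerProductSpace ℝ E] [FiniteDimensional ℝ E]

lemma contDiff_laplacian {f : E → ℝ} {n : WithTop ℕ∞} (hf : ContDiff ℝ (n + 2) f) :
    ContDiff ℝ n (Δ f) := by
  rw [laplacian_eq_iteratedFDeriv_stdOrthonormalBasis]
  exact ContDiff.sum fun i _ ↦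
    (ContinuousMultilinearMap.apply ℝ (fun _ : Fin 2 ↦ E) ℝ _).contDiff.comp
      (hf.iteratedFDeriv_right le_rfl)

lemma abs_laplacian_le {f : E → ℝ} {K : ℝ≥0} (hf : ContDiff ℝ 2 f) (hK : LipschitzWith K (∇ f))
    (x : E) : |Δ f x| ≤ Module.finrank ℝ E * K := by
  set b := stdOrthonormalBasis ℝ E
  have hterm (i) : |⟪b i, fderiv ℝ (∇ f) x (b i)⟫| ≤ K := by
    refine (abs_real_inner_le_norm _ _).trans ?_
    rw [b.norm_eq_one, one_mul]
    simpa using (fderiv ℝ (∇ f) x).le_of_opNorm_le (norm_fderiv_le_of_lipschitz ℝ hK) (b i)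
  rw [laplacian_eq_trace_fderiv_gradient hf.contDiffAt, LinearMap.trace_eq_sum_inner _ b]
  calc _ ≤ ∑ i, |⟪b i, fderiv ℝ (∇ f) x (b i)⟫| := Finset.abs_sum_le_sum_abs _ _
    _ ≤ ∑ _, (K : ℝ) := Finset.sum_le_sum fun i _ ↦ hterm i
    _ = Module.finrank ℝ E * K := by simp

variable [MeasurableSpace E] [BorelSpace E]

lemma memLp_two_comp_add_smul {V : Type*} [NormedAddCommGroup V] {F : E → V} {K : ℝ≥0}
    (hK : LipschitzWith K F) (z : E) (s : ℝ) :
    MemLp (fun ξ ↦ F (z + s • ξ)) 2 (stdGaussian E) :=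
  memLp_two_of_lipschitzWith IsGaussian.memLp_two_id (hK.comp (lipschitzWith_add_smul z s))

lemma integral_inner_self_stdGaussian {F : E → E} {K : ℝ≥0} (hF : Differentiable ℝ F)
    (hK : LipschitzWith K F) :
    ∫ x, ⟪F x, x⟫ ∂stdGaussian E = ∫ x, LinearMap.trace ℝ E (fderiv ℝ F x) ∂stdGaussian E := by
  set b := stdOrthonormalBasis ℝ E
  have hcoord (i) : LipschitzWith K fun x ↦ ⟪b i, F x⟫ := by
    have hnorm : ‖innerSL ℝ (b i)‖₊ = 1 := by
      ext
      simp
    simpa [hnorm, Function.comp_def] using (innerSL ℝ (b i)).lipschitz.comp hK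
  have hfderiv (i) (x : E) :
      fderiv ℝ (fun x ↦ ⟪b i, F x⟫) x (b i) = ⟪b i, fderiv ℝ F x (b i)⟫ := by
    rw [fderiv_inner_apply ℝ (differentiableAt_const _) (hF x)]
    simp
  have hint (i) : Integrable (fun x ↦ ⟪b i, F x⟫ * ⟪x, b i⟫) (stdGaussian E) :=
    (memLp_two_of_lipschitzWith IsGaussian.memLp_two_id (hcoord i)).integrable_mul
      (IsGaussian.memLp_two_id.inner_const (b i))
  have hint' (i) : Integrable (fun x ↦ ⟪b i, fderiv ℝ F x (b i)⟫) (stdGaussian E) := by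
    refine .of_bound ((measurable_fderiv_apply_const ℝ F (b i)).const_inner.aestronglyMeasurable)
      K (.of_forall fun x ↦ (norm_inner_le_norm _ _).trans ?_)
    rw [b.norm_eq_one, one_mul]
    simpa using (fderiv ℝ F x).le_of_opNorm_le (norm_fderiv_le_of_lipschitz ℝ hK) (b i)
  calc ∫ x, ⟪F x, x⟫ ∂stdGaussian E
      = ∑ i, ∫ x, ⟪b i, F x⟫ * ⟪x, b i⟫ ∂stdGaussian E := by
        rw [← integral_finsetSum _ fun i _ ↦ hint i]
        simp_rw [mul_comm ⟪b _, F _⟫, b.sum_inner_mul_inner, real_inner_comm]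
    _ = ∑ i, ∫ x, ⟪b i, fderiv ℝ F x (b i)⟫ ∂stdGaussian E := by
        simp_rw [integral_mul_inner_stdGaussian ((differentiable_const _).inner ℝ hF) (hcoord _),
          hfderiv]
    _ = ∫ x, LinearMap.trace ℝ E (fderiv ℝ F x) ∂stdGaussian E := by
        rw [← integral_finsetSum _ fun i _ ↦ hint' i]
        simp_rw [LinearMap.trace_eq_sum_inner _ b, ContinuousLinearMap.coe_coe]

/-- The mean of `F` under the Gaussian measure centred at `z` with covariance `s² • id`;
as a function of `s² / 2` it is the heat flow started at `F`. -/
def gaussianSmoothing {V : Type*} [NormedAddCommGroup V] [NormedSpace ℝ V] (F : E → V) (s : ℝ)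
    (z : E) : V :=
  ∫ ξ, F (z + s • ξ) ∂stdGaussian E

variable {f : E → ℝ} {K : ℝ≥0}

lemma integrable_comp_add_smul (hf : Differentiable ℝ f) (hK : LipschitzWith K (∇ f)) (z : E)
    (s : ℝ) : Integrable (fun ξ ↦ f (z + s • ξ)) (stdGaussian E) := by
  have hlin : Integrable (fun ξ ↦ f z + ⟪∇ f z, s • ξ⟫) (stdGaussian E) :=
    (integrable_const _).add ((IsGaussian.integrable_id.smul s).const_inner (∇ f z))
  have hrem : Integrable (fun ξ ↦ f (z + s • ξ) - f z - ⟪∇ f z, s • ξ⟫) (stdGaussian E) := by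
    refine (integrable_norm_sq_stdGaussian.const_mul (K * s ^ 2)).mono' ?_ (.of_forall fun ξ ↦ ?_)
    · have := hf.continuous
      exact Continuous.aestronglyMeasurable (by fun_prop)
    · refine (abs_sub_sub_inner_gradient_le hf hK z (s • ξ)).trans_eq ?_
      rw [norm_smul, mul_pow, norm_eq_abs, sq_abs, mul_assoc]
  exact (hrem.add hlin).congr (.of_forall fun ξ ↦ by simp)

lemma integrable_laplacian_comp_add_smul (hf : ContDiff ℝ 2 f) (hK : LipschitzWith K (∇ f))
    (z : E) (s : ℝ) : Integrable (fun ξ ↦ Δ f (z + s • ξ)) (stdGaussian E) := by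
  have hcont : Continuous (Δ f) := (contDiff_laplacian (n := 0) hf).continuous
  exact .of_bound (Continuous.aestronglyMeasurable (by fun_prop)) _
    (.of_forall fun ξ ↦ abs_laplacian_le hf hK _)

lemma integral_inner_gradient_eq_mul_gaussianSmoothing_laplacian (hf : ContDiff ℝ 2 f)
    (hK : LipschitzWith K (∇ f)) (z : E) (s : ℝ) :
    ∫ ξ, ⟪∇ f (z + s • ξ), ξ⟫ ∂stdGaussian E = s * gaussianSmoothing (Δ f) s z := by
  have hgrad : Differentiable ℝ (∇ f) :=
    (contDiff_gradient (n := 1) hf).differentiable one_ne_zero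
  have hfderiv (ξ : E) :
      fderiv ℝ (fun ξ ↦ ∇ f (z + s • ξ)) ξ = s • fderiv ℝ (∇ f) (z + s • ξ) := by
    refine ((hgrad _).hasFDerivAt.comp ξ
      (((hasFDerivAt_id ξ).const_smul s).const_add z)).fderiv.trans ?_
    ext v
    simp
  rw [integral_inner_self_stdGaussian (F := fun ξ ↦ ∇ f (z + s • ξ)) (by fun_prop)
    (hK.comp (lipschitzWith_add_smul z s)), gaussianSmoothing, ← integral_const_mul]
  simp_rw [hfderiv, laplacian_eq_trace_fderiv_gradient hf.contDiffAt,
    ContinuousLinearMap.toLinearMap_smul, map_smul, smul_eq_mul]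

/-- The heat equation for the Gaussian smoothing. -/
lemma hasDerivAt_gaussianSmoothing (hf : ContDiff ℝ 2 f) (hK : LipschitzWith K (∇ f)) (z : E)
    (s : ℝ) :
    HasDerivAt (fun s ↦ gaussianSmoothing f s z) (s * gaussianSmoothing (Δ f) s z) s := by
  have hdiff : Differentiable ℝ f := hf.differentiable two_ne_zero
  have hgrad : Continuous (∇ f) := hK.continuous
  rw [← integral_inner_gradient_eq_mul_gaussianSmoothing_laplacian hf hK]
  refine (hasDerivAt_integral_of_dominated_loc_of_deriv_le (F := fun s ξ ↦ f (z + s • ξ))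
    (F' := fun s ξ ↦ ⟪∇ f (z + s • ξ), ξ⟫)
    (bound := fun ξ ↦ ‖∇ f z‖ * ‖ξ‖ + K * (|s| + 1) * ‖ξ‖ ^ 2) (Metric.ball_mem_nhds s one_pos)
    (.of_forall fun r ↦ (integrable_comp_add_smul hdiff hK z r).aestronglyMeasurable)
    (integrable_comp_add_smul hdiff hK z s) (Continuous.aestronglyMeasurable (by fun_prop))
    (.of_forall fun ξ r hr ↦ ?_) ?_ (.of_forall fun ξ r _ ↦ ?_)).2
  · have hr' : |r| ≤ |s| + 1 := by
      linarith [abs_sub_abs_le_abs_sub r s, (mem_ball_iff_norm.1 hr).le, norm_eq_abs (r - s)]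
    calc ‖⟪∇ f (z + r • ξ), ξ⟫‖ ≤ (‖∇ f z‖ + K * (|r| * ‖ξ‖)) * ‖ξ‖ :=
          (norm_inner_le_norm _ _).trans (by gcongr; exact norm_apply_add_smul_le hK z ξ r)
      _ ≤ (‖∇ f z‖ + K * ((|s| + 1) * ‖ξ‖)) * ‖ξ‖ := by gcongr
      _ = ‖∇ f z‖ * ‖ξ‖ + K * (|s| + 1) * ‖ξ‖ ^ 2 := by ring
  · exact (IsGaussian.integrable_id.norm.const_mul _).add
      (integrable_norm_sq_stdGaussian.const_mul _)
  · have hline : HasDerivAt (fun r : ℝ ↦ z + r • ξ) ξ r := by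
      simpa using ((hasDerivAt_id r).smul_const ξ).const_add z
    rw [inner_gradient_left]
    exact (hdiff _).hasFDerivAt.comp_hasDerivAt r hline

lemma hasGradientAt_gaussianSmoothing (hf : Differentiable ℝ f) (hK : LipschitzWith K (∇ f))
    (s : ℝ) (z : E) :
    HasGradientAt (gaussianSmoothing f s) (gaussianSmoothing (∇ f) s z) z := by
  have hTaylor (v : E) : ‖gaussianSmoothing f s (z + v) - gaussianSmoothing f s z -
      ⟪gaussianSmoothing (∇ f) s z, v⟫‖ ≤ K * ‖v‖ ^ 2 := by
    have hgrad := (memLp_two_comp_add_smul hK z s).integrable one_le_two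
    have hz := integrable_comp_add_smul hf hK z s
    have hzv := integrable_comp_add_smul hf hK (z + v) s
    have hincr : Integrable (fun ξ ↦ f (z + v + s • ξ) - f (z + s • ξ)) (stdGaussian E) :=
      hzv.sub hz
    unfold gaussianSmoothing
    rw [real_inner_comm, ← integral_inner hgrad, ← integral_sub hzv hz,
      ← integral_sub hincr (hgrad.const_inner v)]
    refine (norm_integral_le_of_norm_le_const (C := K * ‖v‖ ^ 2)
      (.of_forall fun ξ ↦ ?_)).trans_eq (by simp)
    rw [add_right_comm, real_inner_comm]
    exact abs_sub_sub_inner_gradient_le hf hK (z + s • ξ) v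
  rw [hasGradientAt_iff_isLittleO_nhds_zero]
  exact (Asymptotics.IsBigO.of_bound K (.of_forall fun v ↦ by
    simpa using hTaylor v)).trans_isLittleO (Asymptotics.isLittleO_norm_pow_id one_lt_two)

lemma abs_gaussianSmoothing_laplacian_sub_le {G : ℝ} (hf : ContDiff ℝ 3 f)
    (hK : LipschitzWith K (∇ f)) (hG : ∀ x, ‖∇ (Δ f) x‖ ≤ G * (1 + ‖x‖)) (hG0 : 0 ≤ G)
    (z v : E) {s : ℝ} (hs : 0 ≤ s) :
    |gaussianSmoothing (Δ f) s (z + v) - gaussianSmoothing (Δ f) s z| ≤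
      G * (1 + ‖z‖ + ‖v‖ + s * √(Module.finrank ℝ E)) * ‖v‖ := by
  have hf2 : ContDiff ℝ 2 f := hf.of_le (by norm_num)
  have hlap : Differentiable ℝ (Δ f) :=
    (contDiff_laplacian (n := 1) hf).differentiable one_ne_zero
  have hnorm : Integrable (fun ξ : E ↦ s * ‖ξ‖) (stdGaussian E) :=
    IsGaussian.integrable_id.norm.const_mul s
  have hint : Integrable (fun ξ : E ↦ G * (1 + ‖z‖ + ‖v‖ + s * ‖ξ‖) * ‖v‖) (stdGaussian E) :=
    (((integrable_const (1 + ‖z‖ + ‖v‖)).add hnorm).const_mul G).mul_const ‖v‖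
  unfold gaussianSmoothing
  rw [← integral_sub (integrable_laplacian_comp_add_smul hf2 hK _ _)
    (integrable_laplacian_comp_add_smul hf2 hK _ _), ← norm_eq_abs]
  refine (norm_integral_le_of_norm_le hint (.of_forall fun ξ ↦ ?_)).trans ?_
  · rw [add_right_comm]
    refine (abs_sub_le_of_norm_gradient_le_one_add_norm hlap hG hG0 _ _).trans ?_
    have hz := norm_add_smul_le z ξ s
    rw [abs_of_nonneg hs] at hz
    gcongr G * ?_ * _
    linarith
  · rw [integral_mul_const, integral_const_mul, integral_add (integrable_const _) hnorm,
      integral_const_mul]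
    simp only [integral_const, probReal_univ, one_smul]
    gcongr
    exact integral_norm_stdGaussian_le

lemma abs_gaussianSmoothing_sub_sub_le {G : ℝ} (hf : ContDiff ℝ 3 f)
    (hK : LipschitzWith K (∇ f)) (hG : ∀ x, ‖∇ (Δ f) x‖ ≤ G * (1 + ‖x‖)) (hG0 : 0 ≤ G)
    (z v : E) {s : ℝ} (hs : 0 ≤ s) :
    |gaussianSmoothing f s (z + v) - f (z + v) - (gaussianSmoothing f s z - f z)| ≤
      G * (s ^ 2 / 2) * (1 + ‖z‖ + ‖v‖ + s * √(Module.finrank ℝ E)) * ‖v‖ := by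
  have hf2 : ContDiff ℝ 2 f := hf.of_le (by norm_num)
  set C := G * (1 + ‖z‖ + ‖v‖ + s * √(Module.finrank ℝ E)) * ‖v‖ with hC
  have hderiv (r : ℝ) : HasDerivAt
      (fun r ↦ gaussianSmoothing f r (z + v) - f (z + v) - (gaussianSmoothing f r z - f z))
      (r * gaussianSmoothing (Δ f) r (z + v) - r * gaussianSmoothing (Δ f) r z) r :=
    ((hasDerivAt_gaussianSmoothing hf2 hK _ r).sub_const _).sub
      ((hasDerivAt_gaussianSmoothing hf2 hK _ r).sub_const _)
  have hbound (r : ℝ) : HasDerivAt (fun r ↦ C * (r ^ 2 / 2)) (C * r) r := by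
    simpa using ((hasDerivAt_pow 2 r).div_const 2).const_mul C
  refine (image_norm_le_of_norm_deriv_right_le_deriv_boundary (a := 0) (b := s)
    (fun r _ ↦ (hderiv r).continuousAt.continuousWithinAt)
    (fun r _ ↦ (hderiv r).hasDerivWithinAt) (by simp [gaussianSmoothing]) hbound
    (fun r hr ↦ ?_) (Set.right_mem_Icc.2 hs)).trans_eq (by rw [hC]; ring)
  rw [← mul_sub, norm_mul, norm_of_nonneg hr.1, mul_comm]
  refine mul_le_mul_of_nonneg_right ?_ hr.1
  refine (abs_gaussianSmoothing_laplacian_sub_le hf hK hG hG0 z v hr.1).trans ?_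
  rw [hC]
  gcongr
  exact hr.2.le

theorem norm_gaussianSmoothing_gradient_sub_le {G : ℝ} (hf : ContDiff ℝ 3 f)
    (hK : LipschitzWith K (∇ f)) (hG : ∀ x, ‖∇ (Δ f) x‖ ≤ G * (1 + ‖x‖)) (hG0 : 0 ≤ G)
    (z : E) {s : ℝ} (hs : 0 ≤ s) :
    ‖gaussianSmoothing (∇ f) s z - ∇ f z‖ ≤
      G * (s ^ 2 / 2) * (1 + ‖z‖ + s * √(Module.finrank ℝ E)) := by
  set C : ℝ → ℝ := fun δ ↦ G * (s ^ 2 / 2) * (1 + ‖z‖ + δ + s * √(Module.finrank ℝ E)) with hC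
  have hdiff : Differentiable ℝ f := hf.differentiable three_ne_zero
  have hderiv : HasFDerivAt (fun z ↦ gaussianSmoothing f s z - f z)
      (toDual ℝ E (gaussianSmoothing (∇ f) s z - ∇ f z)) z := by
    rw [map_sub]
    exact (hasGradientAt_gaussianSmoothing hdiff hK s z).hasFDerivAt.sub
      (hdiff z).hasGradientAt.hasFDerivAt
  have hle {δ : ℝ} (hδ : 0 < δ) : ‖gaussianSmoothing (∇ f) s z - ∇ f z‖ ≤ C δ := by
    rw [← (toDual ℝ E).norm_map]
    refine hderiv.le_of_lip' (by positivity) ?_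
    filter_upwards [Metric.ball_mem_nhds z hδ] with y hy
    have hincr := abs_gaussianSmoothing_sub_sub_le hf hK hG hG0 z (y - z) hs
    rw [add_sub_cancel] at hincr
    refine hincr.trans ?_
    simp only [hC]
    gcongr
    exact (mem_ball_iff_norm.1 hy).le
  have hcont : Filter.Tendsto C (nhdsWithin 0 (Set.Ioi 0)) (nhds (C 0)) :=
    Continuous.continuousWithinAt (by fun_prop)
  simpa [hC] using ge_of_tendsto hcont (eventually_mem_nhdsWithin.mono fun δ ↦ hle)

end GaussianSmoothing

/-! ### Couplings -/

section L2

variable {α E : Type*} [MeasurableSpace α] [NormedAddCommGroup E]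

lemma eLpNorm_two_sq (P : Measure α) (g : α → E) :
    eLpNorm g 2 P ^ 2 = ∫⁻ t, ‖g t‖ₑ ^ 2 ∂P := by
  simpa using eLpNorm_nnreal_pow_eq_lintegral (μ := P) (f := g) (p := 2) two_ne_zero

lemma eLpNorm_two_le_ofReal_iff (P : Measure α) (g : α → E) {c : ℝ} (hc : 0 ≤ c) :
    eLpNorm g 2 P ≤ ENNReal.ofReal c ↔ ∫⁻ t, ‖g t‖ₑ ^ 2 ∂P ≤ ENNReal.ofReal (c ^ 2) := by
  rw [← eLpNorm_two_sq, ENNReal.ofReal_pow hc, ENNReal.pow_le_pow_left_iff two_ne_zero]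

lemma memLp_two_iff_lintegral_enorm_sq_lt_top {P : Measure α} {g : α → E}
    (hg : AEStronglyMeasurable g P) : MemLp g 2 P ↔ ∫⁻ t, ‖g t‖ₑ ^ 2 ∂P < ∞ := by
  simp [← eLpNorm_two_sq, MemLp, hg]

lemma ofReal_norm_sq (x : E) : ENNReal.ofReal (‖x‖ ^ 2) = ‖x‖ₑ ^ 2 := by
  rw [ENNReal.ofReal_pow (norm_nonneg _), ofReal_norm]

lemma lintegral_enorm_sq_eq_ofReal_integral {P : Measure α} {g : α → E} (hg : MemLp g 2 P) :
    ∫⁻ t, ‖g t‖ₑ ^ 2 ∂P = ENNReal.ofReal (∫ t, ‖g t‖ ^ 2 ∂P) := by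
  rw [ofReal_integral_eq_lintegral_ofReal (hg.integrable_norm_pow two_ne_zero)
    (.of_forall fun t ↦ by positivity)]
  simp only [ofReal_norm_sq]

end L2

section Coupling

variable {E : Type*} [NormedAddCommGroup E] [MeasurableSpace E]

/-- `CoupledWithin μ ν c`: some coupling of `μ` and `ν` has `L²` transport cost at most `c`. Unlike
`W2 μ ν ≤ c` it cannot hold for want of a coupling of finite cost. -/
def CoupledWithin (μ ν : Measure E) (c : ℝ) : Prop :=
  0 ≤ c ∧ ∃ γ : Measure (E × E), IsProbabilityMeasure γ ∧ MeasurePreserving Prod.fst γ μ ∧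
    MeasurePreserving Prod.snd γ ν ∧ eLpNorm (fun p ↦ p.1 - p.2) 2 γ ≤ ENNReal.ofReal c

namespace CoupledWithin

variable {μ ν ρ : Measure E} {a b : ℝ}

lemma mono (h : CoupledWithin μ ν a) (hab : a ≤ b) : CoupledWithin μ ν b := by
  obtain ⟨ha, γ, hγ, h1, h2, h3⟩ := h
  exact ⟨ha.trans hab, γ, hγ, h1, h2, h3.trans (ENNReal.ofReal_le_ofReal hab)⟩

lemma isProbabilityMeasure_right (h : CoupledWithin μ ν a) : IsProbabilityMeasure ν := by
  obtain ⟨-, γ, hγ, -, h2, -⟩ := h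
  exact h2.map_eq ▸ Measure.isProbabilityMeasure_map h2.aemeasurable

lemma W2_le (h : CoupledWithin μ ν a) : W2 μ ν ≤ a := by
  obtain ⟨ha, γ, hγ, h1, h2, h3⟩ := h
  refine Real.sqrt_le_iff.2 ⟨ha, ENNReal.toReal_le_of_le_ofReal (by positivity) ?_⟩
  exact (iInf₂_le γ ⟨hγ, h1.map_eq, h2.map_eq⟩).trans
    ((eLpNorm_two_le_ofReal_iff _ _ ha).1 h3)

variable [BorelSpace E] [SecondCountableTopology E]

lemma of_measurePreserving {Ω : Type*} [MeasurableSpace Ω] {P : Measure Ω}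
    [IsProbabilityMeasure P] {X Y : Ω → E} (hX : MeasurePreserving X P μ)
    (hY : MeasurePreserving Y P ν) (ha : 0 ≤ a)
    (h : eLpNorm (fun ω ↦ X ω - Y ω) 2 P ≤ ENNReal.ofReal a) : CoupledWithin μ ν a := by
  have hXY : Measurable fun ω ↦ (X ω, Y ω) := hX.measurable.prodMk hY.measurable
  refine ⟨ha, P.map fun ω ↦ (X ω, Y ω), Measure.isProbabilityMeasure_map hXY.aemeasurable,
    ⟨measurable_fst, ?_⟩, ⟨measurable_snd, ?_⟩, ?_⟩
  · rw [Measure.map_map measurable_fst hXY]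
    exact hX.map_eq
  · rw [Measure.map_map measurable_snd hXY]
    exact hY.map_eq
  · rwa [eLpNorm_map_measure (by fun_prop) hXY.aemeasurable]

lemma refl (μ : Measure E) [IsProbabilityMeasure μ] : CoupledWithin μ μ 0 :=
  of_measurePreserving (.id μ) (.id μ) le_rfl (by simp)

lemma symm (h : CoupledWithin μ ν a) : CoupledWithin ν μ a := by
  obtain ⟨ha, γ, hγ, h1, h2, h3⟩ := h
  refine of_measurePreserving h2 h1 ha (le_of_eq_of_le ?_ h3)
  rw [← eLpNorm_neg]
  congr 1
  ext p
  simp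

end CoupledWithin

lemma exists_measurePreserving_of_fst_eq {α β δ : Type*} [MeasurableSpace α] [MeasurableSpace β]
    [MeasurableSpace δ] [StandardBorelSpace β] [Nonempty β] [StandardBorelSpace δ] [Nonempty δ]
    {ν : Measure α} {γ₁ : Measure (α × β)} {γ₂ : Measure (α × δ)} [IsProbabilityMeasure ν]
    [IsProbabilityMeasure γ₁] [IsProbabilityMeasure γ₂]
    (h₁ : MeasurePreserving Prod.fst γ₁ ν) (h₂ : MeasurePreserving Prod.fst γ₂ ν) :
    ∃ Θ : Measure (α × β × δ), IsProbabilityMeasure Θ ∧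
      MeasurePreserving (Prod.map id Prod.fst) Θ γ₁ ∧
      MeasurePreserving (Prod.map id Prod.snd) Θ γ₂ := by
  have hγ₁ : ν ⊗ₘ γ₁.condKernel = γ₁ := by
    simpa [Measure.fst, h₁.map_eq] using γ₁.disintegrate γ₁.condKernel
  have hγ₂ : ν ⊗ₘ γ₂.condKernel = γ₂ := by
    simpa [Measure.fst, h₂.map_eq] using γ₂.disintegrate γ₂.condKernel
  refine ⟨ν ⊗ₘ (γ₁.condKernel ×ₖ γ₂.condKernel), inferInstance,
    ⟨by fun_prop, ?_⟩, ⟨by fun_prop, ?_⟩⟩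
  · rw [← Measure.compProd_map measurable_fst, ← Kernel.fst_eq, Kernel.fst_prod, hγ₁]
  · rw [← Measure.compProd_map measurable_snd, ← Kernel.snd_eq, Kernel.snd_prod, hγ₂]

lemma CoupledWithin.trans [BorelSpace E] [SecondCountableTopology E] [CompleteSpace E]
    {μ ν ρ : Measure E} {a b : ℝ} (h : CoupledWithin μ ν a) (h' : CoupledWithin ν ρ b) :
    CoupledWithin μ ρ (a + b) := by
  have := h.isProbabilityMeasure_right
  obtain ⟨ha, γ₁, hγ₁, hν₁, hμ, hcost₁⟩ := h.symm
  obtain ⟨hb, γ₂, hγ₂, hν₂, hρ, hcost₂⟩ := h'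
  obtain ⟨Θ, hΘ, hΘ₁, hΘ₂⟩ := exists_measurePreserving_of_fst_eq hν₁ hν₂
  refine of_measurePreserving (hμ.comp hΘ₁) (hρ.comp hΘ₂) (by positivity) ?_
  rw [← eLpNorm_comp_measurePreserving (by fun_prop) hΘ₁, ← eLpNorm_neg] at hcost₁
  rw [← eLpNorm_comp_measurePreserving (by fun_prop) hΘ₂] at hcost₂
  rw [ENNReal.ofReal_add ha hb]
  calc eLpNorm (fun q : E × E × E ↦ q.2.1 - q.2.2) 2 Θ
      = eLpNorm ((fun q ↦ -(q.1 - q.2.1)) + fun q ↦ q.1 - q.2.2) 2 Θ := by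
        congr 1
        ext q
        simp
    _ ≤ _ := eLpNorm_add_le (by fun_prop) (by fun_prop) one_le_two
    _ ≤ _ := add_le_add hcost₁ hcost₂

lemma coupledWithin_W2_add {μ ν : Measure E}
    [IsProbabilityMeasure μ] [IsProbabilityMeasure ν] (hμ : MemLp id 2 μ) (hν : MemLp id 2 ν)
    {δ : ℝ} (hδ : 0 < δ) : CoupledWithin μ ν (W2 μ ν + δ) := by
  set C : Set (Measure (E × E)) :=
    {γ | IsProbabilityMeasure γ ∧ γ.map Prod.fst = μ ∧ γ.map Prod.snd = ν}
  set I : ℝ≥0∞ := ⨅ γ ∈ C, ∫⁻ p, (‖p.1 - p.2‖₊ : ℝ≥0∞) ^ 2 ∂γ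
  have hW : W2 μ ν = √I.toReal := rfl
  have hWδ : 0 < W2 μ ν + δ := add_pos_of_nonneg_of_pos (Real.sqrt_nonneg _) hδ
  have hprod : eLpNorm (fun p : E × E ↦ p.1 - p.2) 2 (μ.prod ν) < ∞ :=
    ((hμ.comp_fst ν).sub (hν.comp_snd μ)).eLpNorm_lt_top
  have hI_lt_top : I < ∞ := by
    refine lt_of_le_of_lt (iInf₂_le (μ.prod ν) ⟨inferInstance, by simp, by simp⟩) ?_
    exact (eLpNorm_two_sq _ _).symm.trans_lt (ENNReal.pow_lt_top hprod)
  have hI_lt : I < ENNReal.ofReal ((W2 μ ν + δ) ^ 2) := by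
    rw [ENNReal.lt_ofReal_iff_toReal_lt hI_lt_top.ne, ← Real.sqrt_lt' hWδ, ← hW]
    exact lt_add_of_pos_right _ hδ
  obtain ⟨γ, hI_lt⟩ := iInf_lt_iff.1 hI_lt
  obtain ⟨hγ, hcost⟩ := iInf_lt_iff.1 hI_lt
  exact ⟨hWδ.le, γ, hγ.1, ⟨measurable_fst, hγ.2.1⟩, ⟨measurable_snd, hγ.2.2⟩,
    (eLpNorm_two_le_ofReal_iff _ _ hWδ.le).2 hcost.le⟩

end Coupling

/-! ### The LMC transition -/

section MeanVariance

variable {α E : Type*} [MeasurableSpace α] [NormedAddCommGroup E] [InnerProductSpace ℝ E]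
  [CompleteSpace E] {P : Measure α} [IsProbabilityMeasure P] {M : α → E}

lemma integral_norm_add_sq (A : E) (hM : MemLp M 2 P) :
    ∫ t, ‖A + M t‖ ^ 2 ∂P = ‖A‖ ^ 2 + 2 * ⟪A, ∫ t, M t ∂P⟫ + ∫ t, ‖M t‖ ^ 2 ∂P := by
  have hint : Integrable M P := hM.integrable one_le_two
  have hinner : Integrable (fun t ↦ 2 * ⟪A, M t⟫) P := (hint.const_inner A).const_mul 2
  have haffine : Integrable (fun t ↦ ‖A‖ ^ 2 + 2 * ⟪A, M t⟫) P :=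
    (integrable_const _).add hinner
  simp only [norm_add_sq_real]
  rw [integral_add haffine (hM.integrable_norm_pow two_ne_zero),
    integral_add (integrable_const _) hinner, integral_const_mul, integral_inner hint]
  simp

lemma lintegral_enorm_add_sq_le (A : E) (hM : MemLp M 2 P) {B V : ℝ}
    (hB : ‖∫ t, M t ∂P‖ ≤ B) (hV : ∫ t, ‖M t‖ ^ 2 ∂P ≤ V) :
    ∫⁻ t, ‖A + M t‖ₑ ^ 2 ∂P ≤ ENNReal.ofReal ((‖A‖ + B) ^ 2 + V) := by
  have hAM : MemLp (fun t ↦ A + M t) 2 P := (memLp_const A).add hM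
  rw [lintegral_enorm_sq_eq_ofReal_integral hAM, integral_norm_add_sq A hM]
  refine ENNReal.ofReal_le_ofReal ?_
  have hinner : ⟪A, ∫ t, M t ∂P⟫ ≤ ‖A‖ * B := (real_inner_le_norm _ _).trans (by gcongr)
  nlinarith [sq_nonneg B]

end MeanVariance

section Drift

variable {E : Type*} [NormedAddCommGroup E] [InnerProductSpace ℝ E] {b : E → E} {m L G h : ℝ}

/-- The properties of the gradient `b = ∇ f` of an `m`-strongly convex `L`-smooth function with
minimizer `0` on which the couplings of the LMC chain rest. -/
structure IsContractiveDrift (m L : ℝ) (b : E → E) : Prop where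
  pos : 0 < m
  le : m ≤ L
  map_zero : b 0 = 0
  lipschitzWith : LipschitzWith L.toNNReal b
  norm_eulerStep_sub_le {h : ℝ} (h0 : 0 ≤ h) (hhL : h * L ≤ 1) (x y : E) :
    ‖x - h • b x - (y - h • b y)‖ ≤ (1 - m * h) * ‖x - y‖

namespace IsContractiveDrift

lemma lipschitz_pos (hb : IsContractiveDrift m L b) : 0 < L :=
  hb.pos.trans_le hb.le

lemma one_sub_nonneg (hb : IsContractiveDrift m L b) (h0 : 0 ≤ h) (hhL : h * L ≤ 1) :
    0 ≤ 1 - m * h := by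
  nlinarith [hb.le]

lemma norm_sub_le (hb : IsContractiveDrift m L b) (x y : E) : ‖b x - b y‖ ≤ L * ‖x - y‖ := by
  simpa [hb.lipschitz_pos.le] using hb.lipschitzWith.norm_sub_le x y

lemma norm_eulerStep_le (hb : IsContractiveDrift m L b) (h0 : 0 ≤ h) (hhL : h * L ≤ 1) (x : E) :
    ‖x - h • b x‖ ≤ (1 - m * h) * ‖x‖ := by
  simpa [hb.map_zero] using hb.norm_eulerStep_sub_le h0 hhL x 0

end IsContractiveDrift

/-- The LMC update with drift `b` and step size `h`, as a function of the state and the noise. -/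
def lmcStep (b : E → E) (h : ℝ) (p : E × E) : E :=
  p.1 - h • b p.1 + √(2 * h) • p.2

lemma continuous_lmcStep (hb : Continuous b) (h : ℝ) : Continuous (lmcStep b h) := by
  unfold lmcStep
  fun_prop

variable [FiniteDimensional ℝ E] [MeasurableSpace E] [BorelSpace E]

/-- The law of one LMC step started from the law `ν`. -/
def lmcTransition (b : E → E) (h : ℝ) (ν : Measure E) : Measure E :=
  (ν.prod (stdGaussian E)).map (lmcStep b h)

lemma measurePreserving_lmcStep (hb : Continuous b) (h : ℝ) (ν : Measure E) :
    MeasurePreserving (lmcStep b h) (ν.prod (stdGaussian E)) (lmcTransition b h ν) :=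
  ⟨(continuous_lmcStep hb h).measurable, rfl⟩

lemma isProbabilityMeasure_lmcTransition (hb : Continuous b) (h : ℝ) (ν : Measure E)
    [IsProbabilityMeasure ν] : IsProbabilityMeasure (lmcTransition b h ν) :=
  Measure.isProbabilityMeasure_map (continuous_lmcStep hb h).aemeasurable

lemma CoupledWithin.lmcTransition {μ ν : Measure E} {a : ℝ} (hc : CoupledWithin μ ν a)
    (hb : IsContractiveDrift m L b) (h0 : 0 ≤ h) (hhL : h * L ≤ 1) :
    CoupledWithin (lmcTransition b h μ) (lmcTransition b h ν) ((1 - m * h) * a) := by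
  obtain ⟨ha, γ, hγ, hμ, hν, hcost⟩ := hc
  have hmh : 0 ≤ 1 - m * h := hb.one_sub_nonneg h0 hhL
  have hstep (ρ : Measure E) := measurePreserving_lmcStep hb.lipschitzWith.continuous h ρ
  refine .of_measurePreserving ((hstep μ).comp (hμ.prod (.id (stdGaussian E))))
    ((hstep ν).comp (hν.prod (.id (stdGaussian E)))) (by positivity) ?_
  calc _ ≤ ENNReal.ofReal (1 - m * h) *
        eLpNorm (fun q : (E × E) × E ↦ q.1.1 - q.1.2) 2 (γ.prod (stdGaussian E)) := by
        refine eLpNorm_le_mul_eLpNorm_of_ae_le_mul (.of_forall fun q ↦ ?_) 2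
        simpa [lmcStep] using hb.norm_eulerStep_sub_le h0 hhL q.1.1 q.1.2
    _ = ENNReal.ofReal (1 - m * h) * eLpNorm (fun p : E × E ↦ p.1 - p.2) 2 γ := by
        congr 1
        exact eLpNorm_comp_measurePreserving (g := fun p : E × E ↦ p.1 - p.2) (by fun_prop)
          measurePreserving_fst
    _ ≤ _ := by
        rw [ENNReal.ofReal_mul hmh]
        gcongr

lemma memLp_add_smul_stdGaussian (a : E) (s : ℝ) :
    MemLp (fun ξ ↦ a + s • ξ) 2 (stdGaussian E) :=
  (memLp_const a).add (IsGaussian.memLp_two_id.const_smul s)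

lemma integral_norm_add_smul_sq_stdGaussian (a : E) (s : ℝ) :
    ∫ ξ, ‖a + s • ξ‖ ^ 2 ∂stdGaussian E = ‖a‖ ^ 2 + s ^ 2 * Module.finrank ℝ E := by
  have hξ : MemLp (fun ξ ↦ s • ξ) 2 (stdGaussian E) := IsGaussian.memLp_two_id.const_smul s
  rw [integral_norm_add_sq a hξ, integral_smul, integral_id_stdGaussian]
  simp [norm_smul, mul_pow, integral_const_mul, integral_norm_sq_stdGaussian]

lemma lintegral_enorm_sq_lmcTransition_le (hb : IsContractiveDrift m L b) (h0 : 0 ≤ h)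
    (hhL : h * L ≤ 1) (ν : Measure E) [IsProbabilityMeasure ν] :
    ∫⁻ x, ‖x‖ₑ ^ 2 ∂lmcTransition b h ν ≤
      ENNReal.ofReal ((1 - m * h) ^ 2) * ∫⁻ x, ‖x‖ₑ ^ 2 ∂ν +
        ENNReal.ofReal (2 * h * Module.finrank ℝ E) := by
  have hstep := continuous_lmcStep hb.lipschitzWith.continuous h
  have hpoint (x : E) : ∫⁻ ξ, ‖lmcStep b h (x, ξ)‖ₑ ^ 2 ∂stdGaussian E ≤
      ENNReal.ofReal ((1 - m * h) ^ 2) * ‖x‖ₑ ^ 2 +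
        ENNReal.ofReal (2 * h * Module.finrank ℝ E) := by
    simp only [lmcStep]
    rw [lintegral_enorm_sq_eq_ofReal_integral (memLp_add_smul_stdGaussian _ _),
      integral_norm_add_smul_sq_stdGaussian, Real.sq_sqrt (by positivity),
      ENNReal.ofReal_add (by positivity) (by positivity), ← ofReal_norm_sq x,
      ← ENNReal.ofReal_mul (by positivity), ← mul_pow]
    gcongr
    exact hb.norm_eulerStep_le h0 hhL x
  rw [lmcTransition, lintegral_map (by fun_prop) hstep.measurable,
    lintegral_prod _ (by fun_prop)]
  refine (lintegral_mono hpoint).trans_eq ?_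
  rw [lintegral_add_right _ (by fun_prop), lintegral_const_mul _ (by fun_prop)]
  simp

lemma eLpNorm_id_lmcTransition_le (hb : IsContractiveDrift m L b) (h0 : 0 ≤ h) (hhL : h * L ≤ 1)
    {ν : Measure E} [IsProbabilityMeasure ν] {S : ℝ} (hS0 : 0 ≤ S)
    (hS : 2 * Module.finrank ℝ E ≤ m * S ^ 2) (hν : eLpNorm id 2 ν ≤ ENNReal.ofReal S) :
    eLpNorm id 2 (lmcTransition b h ν) ≤ ENNReal.ofReal S := by
  have hmh : 0 ≤ 1 - m * h := hb.one_sub_nonneg h0 hhL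
  rw [eLpNorm_two_le_ofReal_iff _ _ hS0] at hν ⊢
  calc _ ≤ _ := lintegral_enorm_sq_lmcTransition_le hb h0 hhL ν
    _ ≤ ENNReal.ofReal ((1 - m * h) ^ 2) * ENNReal.ofReal (S ^ 2) +
        ENNReal.ofReal (2 * h * Module.finrank ℝ E) := by
      gcongr
      exact hν
    _ ≤ ENNReal.ofReal (S ^ 2) := by
      rw [← ENNReal.ofReal_mul (by positivity),
        ← ENNReal.ofReal_add (by positivity) (by positivity)]
      refine ENNReal.ofReal_le_ofReal ?_
      have hnoise : 2 * h * Module.finrank ℝ E ≤ m * h * S ^ 2 := by nlinarith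
      have hcontr : (1 - m * h) ^ 2 ≤ 1 - m * h := by nlinarith [hb.pos, mul_nonneg hb.pos.le h0]
      nlinarith [sq_nonneg S]

end Drift

/-! ### Step halving -/

section Minkowski

variable {α β E : Type*} [MeasurableSpace α] [MeasurableSpace β] [NormedAddCommGroup E]

lemma eLpNorm_affine_norm_le {P : Measure α} [IsProbabilityMeasure P] {p : ℝ≥0∞} (hp : 1 ≤ p)
    {f g : α → E} (hf : AEStronglyMeasurable f P) (hg : AEStronglyMeasurable g P) {u v A B C : ℝ}
    (hu : 0 ≤ u) (hv : 0 ≤ v) (hA : 0 ≤ A) (hB : 0 ≤ B) (hC : 0 ≤ C)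
    (hfA : eLpNorm f p P ≤ ENNReal.ofReal A) (hgC : eLpNorm g p P ≤ ENNReal.ofReal C) :
    eLpNorm (fun t ↦ u * ‖f t‖ + B + v * ‖g t‖) p P ≤ ENNReal.ofReal (u * A + B + v * C) := by
  have hscale {w K : ℝ} {k : α → E} (hw : 0 ≤ w) (hk : eLpNorm k p P ≤ ENNReal.ofReal K) :
      eLpNorm (fun t ↦ w * ‖k t‖) p P ≤ ENNReal.ofReal (w * K) := by
    rw [ENNReal.ofReal_mul hw, ← Real.enorm_eq_ofReal hw]
    refine (eLpNorm_const_smul w (fun t ↦ ‖k t‖) p P).trans_le ?_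
    rw [eLpNorm_norm]
    gcongr
  have hconst : eLpNorm (fun _ : α ↦ B) p P ≤ ENNReal.ofReal B := by
    simp [eLpNorm_const _ (zero_lt_one.trans_le hp).ne' (IsProbabilityMeasure.ne_zero P),
      Real.enorm_eq_ofReal hB]
  have hu_meas : AEStronglyMeasurable (fun t ↦ u * ‖f t‖) P := hf.norm.const_mul u
  rw [ENNReal.ofReal_add (by positivity) (by positivity),
    ENNReal.ofReal_add (by positivity) hB]
  refine (eLpNorm_add_le (hu_meas.add aestronglyMeasurable_const) (hg.norm.const_mul v) hp).trans
    (add_le_add ?_ (hscale hv hgC))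
  exact (eLpNorm_add_le hu_meas aestronglyMeasurable_const hp).trans
    (add_le_add (hscale hu hfA) hconst)

lemma eLpNorm_two_prod_le {P : Measure α} {Q : Measure β} [SFinite Q] {F : α × β → E}
    {u : α → ℝ} {w : α → ℝ≥0∞} {U V : ℝ} (hF : StronglyMeasurable F) (hw : Measurable w)
    (hU0 : 0 ≤ U) (hV0 : 0 ≤ V)
    (hFuw : ∀ x, ∫⁻ y, ‖F (x, y)‖ₑ ^ 2 ∂Q ≤ ENNReal.ofReal (u x ^ 2) + w x)
    (hU : eLpNorm u 2 P ≤ ENNReal.ofReal U) (hV : ∫⁻ x, w x ∂P ≤ ENNReal.ofReal V) :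
    eLpNorm F 2 (P.prod Q) ≤ ENNReal.ofReal √(U ^ 2 + V) := by
  rw [eLpNorm_two_le_ofReal_iff _ _ hU0] at hU
  rw [eLpNorm_two_le_ofReal_iff _ _ (Real.sqrt_nonneg _), Real.sq_sqrt (by positivity),
    ENNReal.ofReal_add (by positivity) hV0,
    lintegral_prod _ (hF.enorm.pow_const 2).aemeasurable]
  refine (lintegral_mono hFuw).trans ?_
  rw [lintegral_add_right _ hw]
  refine add_le_add (le_of_eq_of_le ?_ hU) hV
  simp [← ofReal_norm_sq]

end Minkowski

section Halving

variable {E : Type*} [NormedAddCommGroup E] [InnerProductSpace ℝ E] [FiniteDimensional ℝ E]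
  [MeasurableSpace E] [BorelSpace E] {b : E → E} {m L G h : ℝ}

/-- The drift `b` is changed by a Gaussian perturbation of size `s` by `O(s²)` in the mean, with a
constant `G` and linear growth in the base point. -/
structure HasSmoothingBias (G : ℝ) (b : E → E) : Prop where
  nonneg : 0 ≤ G
  norm_gaussianSmoothing_sub_le (z : E) {s : ℝ} (hs : 0 ≤ s) :
    ‖gaussianSmoothing b s z - b z‖ ≤ G * (s ^ 2 / 2) * (1 + ‖z‖ + s * √(Module.finrank ℝ E))

lemma measurePreserving_inv_sqrt_two_smul_add :
    MeasurePreserving (fun p : E × E ↦ (√2)⁻¹ • (p.1 + p.2))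
      ((stdGaussian E).prod (stdGaussian E)) (stdGaussian E) := by
  refine ⟨by fun_prop, ?_⟩
  have hcomp : (fun p : E × E ↦ (√2)⁻¹ • (p.1 + p.2)) =
      (fun x : E ↦ (√2)⁻¹ • x) ∘ fun p ↦ p.1 + p.2 := rfl
  have hid : (fun x : E ↦ (√2)⁻¹ • x) ∘ (fun x ↦ √2 • x) = id := by
    ext x
    simp [smul_smul]
  rw [hcomp, ← Measure.map_map (by fun_prop) (by fun_prop), map_add_stdGaussian_prod,
    Measure.map_map (by fun_prop) (by fun_prop), hid, Measure.map_id]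

lemma measurePreserving_lmcStep_two_mul (hb : Continuous b) (h : ℝ) (ν : Measure E) [SFinite ν] :
    MeasurePreserving (fun q : E × E × E ↦ lmcStep b (2 * h) (q.1, (√2)⁻¹ • (q.2.1 + q.2.2)))
      (ν.prod ((stdGaussian E).prod (stdGaussian E))) (lmcTransition b (2 * h) ν) :=
  (measurePreserving_lmcStep hb (2 * h) ν).comp
    ((MeasurePreserving.id ν).prod measurePreserving_inv_sqrt_two_smul_add)

lemma measurePreserving_lmcStep_lmcStep (hb : Continuous b) (h : ℝ) (ν : Measure E)
    [IsProbabilityMeasure ν] :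
    MeasurePreserving (fun q : E × E × E ↦ lmcStep b h (lmcStep b h (q.1, q.2.1), q.2.2))
      (ν.prod ((stdGaussian E).prod (stdGaussian E)))
      (lmcTransition b h (lmcTransition b h ν)) := by
  have := isProbabilityMeasure_lmcTransition hb h ν
  exact (measurePreserving_lmcStep hb h _).comp
    (((measurePreserving_lmcStep hb h ν).prod (.id (stdGaussian E))).comp
      ((measurePreserving_prodAssoc ν (stdGaussian E) (stdGaussian E)).symm
        MeasurableEquiv.prodAssoc))

/-- One LMC step of size `2 * h` from `z` minus two steps of size `h` from `z`, driven by the same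
total noise, where `ξ` is the noise of the first small step. -/
def halvingError (b : E → E) (h : ℝ) (z ξ : E) : E :=
  h • (b (lmcStep b h (z, ξ)) - b z)

omit [FiniteDimensional ℝ E] [MeasurableSpace E] [BorelSpace E] in
lemma lmcStep_two_mul_sub_lmcStep_lmcStep (b : E → E) (h : ℝ) (x z ξ ξ' : E) :
    lmcStep b (2 * h) (x, (√2)⁻¹ • (ξ + ξ')) - lmcStep b h (lmcStep b h (z, ξ), ξ') =
      x - (2 * h) • b x - (z - (2 * h) • b z) + halvingError b h z ξ := by
  have hsqrt : √(2 * (2 * h)) * (√2)⁻¹ = √(2 * h) := by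
    rw [Real.sqrt_mul zero_le_two, mul_comm, inv_mul_cancel_left₀ (by positivity)]
  simp only [halvingError, lmcStep, smul_smul, hsqrt]
  module

omit [FiniteDimensional ℝ E] [MeasurableSpace E] [BorelSpace E] in
lemma norm_halvingError_le (hb : IsContractiveDrift m L b) (h0 : 0 ≤ h) (z ξ : E) :
    ‖halvingError b h z ξ‖ ≤ h * L * ‖-(h • b z) + √(2 * h) • ξ‖ := by
  have hsub : lmcStep b h (z, ξ) - z = -(h • b z) + √(2 * h) • ξ := by
    simp only [lmcStep]
    abel
  rw [halvingError, norm_smul, norm_of_nonneg h0, mul_assoc, ← hsub]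
  gcongr
  exact hb.norm_sub_le _ z

lemma memLp_halvingError (hb : IsContractiveDrift m L b) (h0 : 0 ≤ h) (z : E) :
    MemLp (halvingError b h z) 2 (stdGaussian E) := by
  have hcont := hb.lipschitzWith.continuous
  refine (memLp_add_smul_stdGaussian (-(h • b z)) √(2 * h)).of_le_mul ?_
    (.of_forall (norm_halvingError_le hb h0 z))
  unfold halvingError lmcStep
  fun_prop

lemma integral_norm_sq_halvingError_le (hb : IsContractiveDrift m L b) (h0 : 0 ≤ h) (z : E) :
    ∫ ξ, ‖halvingError b h z ξ‖ ^ 2 ∂stdGaussian E ≤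
      h ^ 2 * L ^ 2 * (h ^ 2 * L ^ 2 * ‖z‖ ^ 2 + 2 * h * Module.finrank ℝ E) := by
  have hbz : ‖b z‖ ≤ L * ‖z‖ := by simpa [hb.map_zero] using hb.norm_sub_le z 0
  calc ∫ ξ, ‖halvingError b h z ξ‖ ^ 2 ∂stdGaussian E
      ≤ ∫ ξ, h ^ 2 * L ^ 2 * ‖-(h • b z) + √(2 * h) • ξ‖ ^ 2 ∂stdGaussian E := by
        refine integral_mono ((memLp_halvingError hb h0 z).integrable_norm_pow two_ne_zero)
          (((memLp_add_smul_stdGaussian _ _).integrable_norm_pow two_ne_zero).const_mul _)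
          fun ξ ↦ ?_
        rw [← mul_pow, ← mul_pow]
        exact pow_le_pow_left₀ (norm_nonneg _) (norm_halvingError_le hb h0 z ξ) 2
    _ = h ^ 2 * L ^ 2 * (h ^ 2 * ‖b z‖ ^ 2 + 2 * h * Module.finrank ℝ E) := by
        rw [integral_const_mul, integral_norm_add_smul_sq_stdGaussian,
          Real.sq_sqrt (by positivity), norm_neg, norm_smul, norm_of_nonneg h0, mul_pow]
    _ ≤ h ^ 2 * L ^ 2 * (h ^ 2 * (L * ‖z‖) ^ 2 + 2 * h * Module.finrank ℝ E) := by gcongr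
    _ = _ := by ring

lemma norm_integral_halvingError_le (hb : IsContractiveDrift m L b) (hbias : HasSmoothingBias G b)
    (h0 : 0 ≤ h) (hhL : h * L ≤ 1) (z : E) :
    ‖∫ ξ, halvingError b h z ξ ∂stdGaussian E‖ ≤
      h ^ 2 * G * (1 + √(2 * h) * √(Module.finrank ℝ E)) + h ^ 2 * (G + L ^ 2) * ‖z‖ := by
  set w : E := z - h • b z with hw
  have hL := hb.lipschitz_pos
  have hG := hbias.nonneg
  have hbz : ‖b z‖ ≤ L * ‖z‖ := by simpa [hb.map_zero] using hb.norm_sub_le z 0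
  have hw_norm : ‖w‖ ≤ ‖z‖ := (hb.norm_eulerStep_le h0 hhL z).trans
    (mul_le_of_le_one_left (norm_nonneg z) (sub_le_self 1 (mul_nonneg hb.pos.le h0)))
  have hdrift : ‖b w - b z‖ ≤ h * L ^ 2 * ‖z‖ := by
    calc ‖b w - b z‖ ≤ L * ‖w - z‖ := hb.norm_sub_le w z
      _ = L * (h * ‖b z‖) := by
        rw [hw, sub_sub_cancel_left, norm_neg, norm_smul, norm_of_nonneg h0]
      _ ≤ L * (h * (L * ‖z‖)) := by gcongr
      _ = _ := by ring
  have hsmooth : ‖gaussianSmoothing b √(2 * h) w - b w‖ ≤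
      G * h * (1 + ‖z‖ + √(2 * h) * √(Module.finrank ℝ E)) := by
    refine (hbias.norm_gaussianSmoothing_sub_le w (Real.sqrt_nonneg _)).trans ?_
    rw [Real.sq_sqrt (by positivity), mul_div_cancel_left₀ _ two_ne_zero]
    gcongr
  have hint : Integrable (fun ξ ↦ b (w + √(2 * h) • ξ)) (stdGaussian E) :=
    (memLp_two_comp_add_smul hb.lipschitzWith w √(2 * h)).integrable one_le_two
  have hmean : ∫ ξ, halvingError b h z ξ ∂stdGaussian E =
      h • (gaussianSmoothing b √(2 * h) w - b w + (b w - b z)) := by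
    simp only [halvingError, lmcStep, ← hw]
    rw [integral_smul, integral_sub hint (integrable_const _), gaussianSmoothing]
    simp
  rw [hmean, norm_smul, norm_of_nonneg h0]
  calc _ ≤ h * (G * h * (1 + ‖z‖ + √(2 * h) * √(Module.finrank ℝ E)) + h * L ^ 2 * ‖z‖) := by
        gcongr
        exact (norm_add_le _ _).trans (add_le_add hsmooth hdrift)
    _ = _ := by ring

-- The mean of the error adds to the distance linearly, its fluctuation only in quadrature.
lemma lintegral_enorm_lmcStep_two_mul_sub_sq_le (hb : IsContractiveDrift m L b)
    (hbias : HasSmoothingBias G b) (h0 : 0 ≤ h) (hhL : 2 * h * L ≤ 1) (x z : E) :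
    ∫⁻ ξ : E × E, ‖lmcStep b (2 * h) (x, (√2)⁻¹ • (ξ.1 + ξ.2)) -
        lmcStep b h (lmcStep b h (z, ξ.1), ξ.2)‖ₑ ^ 2 ∂(stdGaussian E).prod (stdGaussian E) ≤
      ENNReal.ofReal (((1 - m * (2 * h)) * ‖x - z‖ +
        h ^ 2 * G * (1 + √(2 * h) * √(Module.finrank ℝ E)) + h ^ 2 * (G + L ^ 2) * ‖z‖) ^ 2) +
      (ENNReal.ofReal (h ^ 4 * L ^ 4) * ‖z‖ₑ ^ 2 +
        ENNReal.ofReal (2 * h ^ 3 * L ^ 2 * Module.finrank ℝ E)) := by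
  have hL := hb.lipschitz_pos
  have hG := hbias.nonneg
  have hhL' : h * L ≤ 1 := by nlinarith [mul_nonneg h0 hL.le]
  set A : E := x - (2 * h) • b x - (z - (2 * h) • b z)
  set B : ℝ := h ^ 2 * G * (1 + √(2 * h) * √(Module.finrank ℝ E)) + h ^ 2 * (G + L ^ 2) * ‖z‖
    with hB
  have hA : ‖A‖ ≤ (1 - m * (2 * h)) * ‖x - z‖ :=
    hb.norm_eulerStep_sub_le (by positivity) hhL x z
  have hmeas : AEMeasurable (fun ξ ↦ ‖A + halvingError b h z ξ‖ₑ ^ 2) (stdGaussian E) :=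
    (((memLp_halvingError hb h0 z).aestronglyMeasurable.const_add A).enorm).pow_const 2
  simp only [lmcStep_two_mul_sub_lmcStep_lmcStep]
  calc _ = ∫⁻ ξ, ‖A + halvingError b h z ξ‖ₑ ^ 2 ∂stdGaussian E := by
        rw [lintegral_prod _ hmeas.comp_fst]
        simp
    _ ≤ ENNReal.ofReal ((‖A‖ + B) ^ 2 +
        h ^ 2 * L ^ 2 * (h ^ 2 * L ^ 2 * ‖z‖ ^ 2 + 2 * h * Module.finrank ℝ E)) :=
      lintegral_enorm_add_sq_le A (memLp_halvingError hb h0 z)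
        (norm_integral_halvingError_le hb hbias h0 hhL' z)
        (integral_norm_sq_halvingError_le hb h0 z)
    _ ≤ _ := by
      rw [← ofReal_norm_sq z, ← ENNReal.ofReal_mul (by positivity),
        ← ENNReal.ofReal_add (by positivity) (by positivity),
        ← ENNReal.ofReal_add (by positivity) (by positivity), add_assoc (_ * ‖x - z‖), ← hB]
      refine ENNReal.ofReal_le_ofReal (add_le_add ?_ (by ring_nf; rfl))
      gcongr

theorem CoupledWithin.lmcTransition_halving {μ ν : Measure E} {a R : ℝ}
    (hc : CoupledWithin μ ν a) (hb : IsContractiveDrift m L b) (hbias : HasSmoothingBias G b)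
    (h0 : 0 ≤ h) (hhL : 2 * h * L ≤ 1) (hR0 : 0 ≤ R) (hR : eLpNorm id 2 ν ≤ ENNReal.ofReal R) :
    CoupledWithin (_root_.lmcTransition b (2 * h) μ)
      (_root_.lmcTransition b h (_root_.lmcTransition b h ν))
      √(((1 - m * (2 * h)) * a + h ^ 2 * G * (1 + √(2 * h) * √(Module.finrank ℝ E)) +
          h ^ 2 * (G + L ^ 2) * R) ^ 2 +
        (h ^ 4 * L ^ 4 * R ^ 2 + 2 * h ^ 3 * L ^ 2 * Module.finrank ℝ E)) := by
  have := hc.isProbabilityMeasure_right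
  have := hc.symm.isProbabilityMeasure_right
  have hL := hb.lipschitz_pos
  have hG := hbias.nonneg
  have hmh : 0 ≤ 1 - m * (2 * h) := hb.one_sub_nonneg (by positivity) hhL
  have hcont := hb.lipschitzWith.continuous
  obtain ⟨ha, γ, hγ, hμ, hν, hcost⟩ := hc
  have hX := (measurePreserving_lmcStep_two_mul hcont h μ).comp
    (hμ.prod (.id ((stdGaussian E).prod (stdGaussian E))))
  have hY := (measurePreserving_lmcStep_lmcStep hcont h ν).comp
    (hν.prod (.id ((stdGaussian E).prod (stdGaussian E))))
  have hR_snd : eLpNorm (fun p : E × E ↦ p.2) 2 γ ≤ ENNReal.ofReal R :=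
    (eLpNorm_comp_measurePreserving (g := id) (by fun_prop) hν).trans_le hR
  refine .of_measurePreserving hX hY (Real.sqrt_nonneg _) ?_
  refine eLpNorm_two_prod_le (hX.measurable.sub hY.measurable).stronglyMeasurable (by fun_prop)
    (by positivity) (by positivity)
    (fun p ↦ lintegral_enorm_lmcStep_two_mul_sub_sq_le hb hbias h0 hhL p.1 p.2)
    (eLpNorm_affine_norm_le one_le_two (by fun_prop) (by fun_prop) hmh (by positivity) ha
      (by positivity) hR0 hcost hR_snd) ?_
  rw [lintegral_add_right _ (by fun_prop), lintegral_const_mul _ (by fun_prop),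
    ENNReal.ofReal_add (by positivity) (by positivity),
    ENNReal.ofReal_mul (p := h ^ 4 * L ^ 4) (by positivity)]
  simp only [lintegral_const, measure_univ, mul_one]
  gcongr
  exact (eLpNorm_two_le_ofReal_iff _ _ hR0).1 hR_snd

end Halving

/-! ### Metropolis coupling -/

section Metropolis

variable {α β : Type*} [MeasurableSpace α] [MeasurableSpace β]

lemma map_withDensity_comp {ρ : Measure α} {φ : α → β} {g : β → ℝ≥0∞} (hφ : Measurable φ)
    (hg : Measurable g) : (ρ.withDensity (g ∘ φ)).map φ = (ρ.map φ).withDensity g := by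
  ext s hs
  rw [Measure.map_apply hφ hs, withDensity_apply _ (hφ hs), withDensity_apply _ hs,
    setLIntegral_map hs hg hφ]
  rfl

/-- The law of `(p.2, p')`, where `p ∼ J` is a state with a proposed move and `p'` is `p.2` if the
move is accepted, which happens with probability `θ p`, and `p.1` otherwise. -/
def metropolisCoupling (J : Measure (α × α)) (θ : α × α → ℝ≥0∞) : Measure (α × α) :=
  (J.withDensity θ).map (fun p ↦ (p.2, p.2)) + (J.withDensity (1 - θ)).map Prod.swap

variable {J : Measure (α × α)} {θ : α × α → ℝ≥0∞}

lemma withDensity_add_withDensity_one_sub (hθ : Measurable θ) (hθ1 : θ ≤ 1) :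
    J.withDensity θ + J.withDensity (1 - θ) = J := by
  rw [← withDensity_add_left hθ, add_tsub_cancel_of_le hθ1, withDensity_one]

lemma map_fst_metropolisCoupling (hθ : Measurable θ) (hθ1 : θ ≤ 1) :
    (metropolisCoupling J θ).map Prod.fst = J.map Prod.snd := by
  conv_rhs => rw [← withDensity_add_withDensity_one_sub (J := J) hθ hθ1]
  rw [metropolisCoupling, Measure.map_add _ _ measurable_fst,
    Measure.map_add _ _ measurable_snd, Measure.map_map measurable_fst (by fun_prop),
    Measure.map_map measurable_fst measurable_swap]
  rfl

lemma map_snd_metropolisCoupling (hθ : Measurable θ) (hθ1 : θ ≤ 1)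
    (hsymm : (J.withDensity θ).map Prod.swap = J.withDensity θ) :
    (metropolisCoupling J θ).map Prod.snd = J.map Prod.fst := by
  have hfst : (J.withDensity θ).map Prod.fst = (J.withDensity θ).map Prod.snd := by
    conv_lhs => rw [← hsymm, Measure.map_map measurable_fst measurable_swap]
    rfl
  conv_rhs => rw [← withDensity_add_withDensity_one_sub (J := J) hθ hθ1]
  rw [metropolisCoupling, Measure.map_add _ _ measurable_fst,
    Measure.map_add _ _ measurable_snd, Measure.map_map measurable_snd (by fun_prop),
    Measure.map_map measurable_snd measurable_swap, hfst]
  rfl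

lemma lintegral_metropolisCoupling (hθ : Measurable θ) {c : α × α → ℝ≥0∞} (hc : Measurable c)
    (hdiag : ∀ x, c (x, x) = 0) :
    ∫⁻ p, c p ∂metropolisCoupling J θ = ∫⁻ p, (1 - θ p) * c p.swap ∂J := by
  have hc_swap : Measurable fun p : α × α ↦ c p.swap := hc.comp measurable_swap
  rw [metropolisCoupling, lintegral_add_measure, lintegral_map hc (by fun_prop),
    lintegral_map hc measurable_swap,
    lintegral_withDensity_eq_lintegral_mul _ (measurable_one.sub hθ) hc_swap]
  simp [hdiag]

/-- The Metropolis acceptance probability for a joint law of state and proposal with density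
`exp (-V)` with respect to a symmetric measure. -/
def metropolisAcceptance (V : α × α → ℝ) (p : α × α) : ℝ≥0∞ :=
  ENNReal.ofReal (min 1 (exp (V p - V p.swap)))

lemma measurable_metropolisAcceptance {V : α × α → ℝ} (hV : Measurable V) :
    Measurable (metropolisAcceptance V) := by
  unfold metropolisAcceptance
  fun_prop

omit [MeasurableSpace α] in
lemma metropolisAcceptance_le_one (V : α × α → ℝ) : metropolisAcceptance V ≤ 1 :=
  fun _ ↦ ENNReal.ofReal_le_one.2 (min_le_left _ _)

omit [MeasurableSpace α] in
lemma one_sub_metropolisAcceptance_le (V : α × α → ℝ) (p : α × α) :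
    1 - metropolisAcceptance V p ≤ ENNReal.ofReal (min 1 |V p - V p.swap|) := by
  rw [metropolisAcceptance, ← ENNReal.ofReal_one, ← ENNReal.ofReal_sub _ (by positivity)]
  refine ENNReal.ofReal_le_ofReal (le_min (sub_le_self 1 (by positivity)) ?_)
  rw [sub_le_comm]
  refine le_min (sub_le_self 1 (abs_nonneg _)) ?_
  linarith [neg_abs_le (V p - V p.swap), add_one_le_exp (V p - V p.swap)]

lemma map_swap_withDensity_metropolisAcceptance {ρ : Measure α} [SFinite ρ] {V : α × α → ℝ}
    (hV : Measurable V) (C : ℝ≥0∞)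
    (hJ : J = C • (ρ.prod ρ).withDensity fun p ↦ ENNReal.ofReal (exp (-V p))) :
    (J.withDensity (metropolisAcceptance V)).map Prod.swap =
      J.withDensity (metropolisAcceptance V) := by
  have hθ := measurable_metropolisAcceptance hV
  set S : α × α → ℝ≥0∞ := (fun p ↦ ENNReal.ofReal (exp (-V p))) * metropolisAcceptance V with hS
  have hS_meas : Measurable S := by fun_prop
  have hS_symm : S ∘ Prod.swap = S := by
    ext p
    simp only [hS, metropolisAcceptance, Function.comp_apply, Pi.mul_apply, Prod.swap_swap]
    rw [← ENNReal.ofReal_mul (exp_pos _).le, ← ENNReal.ofReal_mul (exp_pos _).le,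
      mul_min_of_nonneg _ _ (exp_pos _).le, mul_min_of_nonneg _ _ (exp_pos _).le,
      ← exp_add, ← exp_add, min_comm, mul_one, mul_one, neg_add_eq_sub, neg_add_eq_sub,
      sub_sub_cancel_left, sub_sub_cancel_left]
  rw [hJ, withDensity_smul_measure, ← withDensity_mul _ (by fun_prop) hθ, Measure.map_smul]
  conv_lhs => rw [← hS, ← hS_symm, map_withDensity_comp measurable_swap hS_meas,
    Measure.prod_swap]

theorem coupledWithin_map_snd_map_fst_of_density {E : Type*} [NormedAddCommGroup E]
    [MeasurableSpace E] [BorelSpace E] [SecondCountableTopology E]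
    {J : Measure (E × E)} [IsProbabilityMeasure J] {ρ : Measure E} [SFinite ρ]
    {V : E × E → ℝ} (hV : Measurable V) (C : ℝ≥0∞)
    (hJ : J = C • (ρ.prod ρ).withDensity fun p ↦ ENNReal.ofReal (exp (-V p)))
    {c : ℝ} (hc : 0 ≤ c)
    (hcost : ∫⁻ p, ENNReal.ofReal (min 1 |V p - V p.swap|) * ‖p.2 - p.1‖ₑ ^ 2 ∂J ≤
      ENNReal.ofReal (c ^ 2)) :
    CoupledWithin (J.map Prod.snd) (J.map Prod.fst) c := by
  have hθ := measurable_metropolisAcceptance hV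
  have hθ1 := metropolisAcceptance_le_one V
  have hfst := map_fst_metropolisCoupling (J := J) hθ hθ1
  have hsnd := map_snd_metropolisCoupling hθ hθ1
    (map_swap_withDensity_metropolisAcceptance hV C hJ)
  have : IsProbabilityMeasure ((metropolisCoupling J (metropolisAcceptance V)).map Prod.fst) :=
    hfst ▸ Measure.isProbabilityMeasure_map measurable_snd.aemeasurable
  refine ⟨hc, _, Measure.isProbabilityMeasure_of_map Prod.fst,
    ⟨measurable_fst, hfst⟩, ⟨measurable_snd, hsnd⟩, ?_⟩
  rw [eLpNorm_two_le_ofReal_iff _ _ hc,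
    lintegral_metropolisCoupling hθ (by fun_prop) (by simp)]
  refine (lintegral_mono fun p ↦ ?_).trans hcost
  gcongr
  exacts [one_sub_metropolisAcceptance_le V p, le_rfl]

end Metropolis

section GibbsTransition

variable {E : Type*} [NormedAddCommGroup E] [InnerProductSpace ℝ E] {f : E → ℝ} {b : E → E}
  {η : ℝ}

/-- Up to an additive constant, minus the logarithm of the joint density of two consecutive states
`p.1`, `p.2` of LMC with drift `b` and step size `η`, when `p.1` has density `exp (-f)`. -/
def lmcPairEnergy (f : E → ℝ) (b : E → E) (η : ℝ) (p : E × E) : ℝ :=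
  f p.1 + ‖p.2 - p.1 + η • b p.1‖ ^ 2 / (4 * η)

lemma lmcPairEnergy_lmcStep (hη : 0 < η) (p : E × E) :
    lmcPairEnergy f b η (p.1, lmcStep b η p) = f p.1 + ‖p.2‖ ^ 2 / 2 := by
  have hnoise : lmcStep b η p - p.1 + η • b p.1 = √(2 * η) • p.2 := by
    rw [lmcStep]
    abel
  rw [lmcPairEnergy, hnoise, norm_smul, mul_pow, norm_of_nonneg (sqrt_nonneg _),
    sq_sqrt (by positivity)]
  field_simp
  ring

variable [FiniteDimensional ℝ E] [MeasurableSpace E] [BorelSpace E]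

lemma measurePreserving_lmcStep_volume (hb : Continuous b) (hη : 0 < η) :
    MeasurePreserving (fun p : E × E ↦ (p.1, lmcStep b η p)) (volume.prod volume)
      (volume.prod (ENNReal.ofReal |(√(2 * η) ^ Module.finrank ℝ E)⁻¹| • volume)) := by
  refine (MeasurePreserving.id volume).skew_product (g := fun x ξ ↦ lmcStep b η (x, ξ))
    (continuous_lmcStep hb η).measurable (.of_forall fun x ↦ ?_)
  change volume.map ((fun y ↦ x - η • b x + y) ∘ (√(2 * η) • ·)) = _
  rw [← Measure.map_map (by fun_prop) (by fun_prop),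
    Measure.map_addHaar_smul volume (by positivity), Measure.map_smul, map_add_left_eq_self]

lemma exists_map_lmcStep_eq_smul_withDensity (hf : Continuous f) (hb : Continuous b) (hη : 0 < η)
    {μ : Measure E} {c : ℝ≥0∞}
    (hμ : μ = c • volume.withDensity fun x ↦ ENNReal.ofReal (exp (-f x))) :
    ∃ C : ℝ≥0∞, (μ.prod (stdGaussian E)).map (fun p ↦ (p.1, lmcStep b η p)) =
      C • (volume.prod volume).withDensity
        fun p ↦ ENNReal.ofReal (exp (-lmcPairEnergy f b η p)) := by
  set Z : ℝ := ((2 * π) ^ ((Module.finrank ℝ E : ℝ) / 2))⁻¹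
  set g : E × E → ℝ≥0∞ := fun p ↦ ENNReal.ofReal (exp (-lmcPairEnergy f b η p))
  have hg : Measurable g := by
    unfold g lmcPairEnergy
    fun_prop
  have hpair := measurePreserving_lmcStep_volume hb hη
  have hdensity (p : E × E) : ENNReal.ofReal (exp (-f p.1)) *
      ENNReal.ofReal (stdGaussianPDFReal p.2) =
        ENNReal.ofReal Z * g (p.1, lmcStep b η p) := by
    rw [← ENNReal.ofReal_mul (exp_pos _).le, ← ENNReal.ofReal_mul (by positivity),
      lmcPairEnergy_lmcStep hη, stdGaussianPDFReal, mul_left_comm, ← exp_add, neg_add]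
  have hprod : μ.prod (stdGaussian E) = c • (volume.prod volume).withDensity
      ((ENNReal.ofReal Z • g) ∘ fun p ↦ (p.1, lmcStep b η p)) := by
    rw [hμ, Measure.prod_smul_left, stdGaussian_eq_withDensity, prod_withDensity (by fun_prop)
      continuous_stdGaussianPDFReal.measurable.ennreal_ofReal]
    congr 2 with p
    exact hdensity p
  refine ⟨c * (ENNReal.ofReal |(√(2 * η) ^ Module.finrank ℝ E)⁻¹| * ENNReal.ofReal Z), ?_⟩
  rw [hprod, Measure.map_smul, map_withDensity_comp hpair.measurable (hg.const_smul _),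
    hpair.map_eq, Measure.prod_smul_right, withDensity_smul_measure, withDensity_smul _ hg,
    smul_smul, smul_smul, mul_assoc]

theorem coupledWithin_lmcTransition_of_gibbs (hf : Continuous f) (hb : Continuous b) (hη : 0 < η)
    {μ : Measure E} [IsProbabilityMeasure μ] {c : ℝ≥0∞}
    (hμ : μ = c • volume.withDensity fun x ↦ ENNReal.ofReal (exp (-f x))) {a : ℝ} (ha : 0 ≤ a)
    (hcost : ∫⁻ p, ENNReal.ofReal (min 1 |lmcPairEnergy f b η (p.1, lmcStep b η p) -
        lmcPairEnergy f b η (lmcStep b η p, p.1)|) * ‖lmcStep b η p - p.1‖ₑ ^ 2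
        ∂μ.prod (stdGaussian E) ≤ ENNReal.ofReal (a ^ 2)) :
    CoupledWithin (lmcTransition b η μ) μ a := by
  obtain ⟨C, hC⟩ := exists_map_lmcStep_eq_smul_withDensity hf hb hη hμ
  have hstep := continuous_lmcStep hb η
  have hpair : Measurable fun p : E × E ↦ (p.1, lmcStep b η p) := by fun_prop
  have hV : Measurable (lmcPairEnergy f b η) := by
    unfold lmcPairEnergy
    fun_prop
  have := Measure.isProbabilityMeasure_map (μ := μ.prod (stdGaussian E)) hpair.aemeasurable
  have hV_swap : Measurable fun p : E × E ↦ lmcPairEnergy f b η p.swap := hV.comp measurable_swap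
  have hcoupled := coupledWithin_map_snd_map_fst_of_density hV C hC ha (by
    rwa [lintegral_map (by fun_prop) hpair])
  rw [Measure.map_map measurable_snd hpair, Measure.map_map measurable_fst hpair] at hcoupled
  have hfst : (μ.prod (stdGaussian E)).map (Prod.fst ∘ fun p ↦ (p.1, lmcStep b η p)) = μ :=
    measurePreserving_fst.map_eq
  rwa [hfst] at hcoupled

end GibbsTransition

/-! ### Near-stationarity of the Gibbs measure -/

section Trapezoid

open Filter Topology Asymptotics

variable {E : Type*} [NormedAddCommGroup E] [InnerProductSpace ℝ E] [CompleteSpace E] {f : E → ℝ}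

lemma isLittleO_sub_inner_gradient_sub_half_inner {A : E →L[ℝ] E} {x : E}
    (hf : Differentiable ℝ f) (hA : HasFDerivAt (∇ f) A x) :
    (fun v ↦ f (x + v) - f x - ⟪∇ f x, v⟫ - ⟪A v, v⟫ / 2) =o[𝓝 0] fun v ↦ ‖v‖ ^ 2 := by
  have hgrad := hasFDerivAt_iff_isLittleO_nhds_zero.1 hA
  rw [isLittleO_iff] at hgrad ⊢
  intro c hc
  obtain ⟨ρ, hρ, hball⟩ := Metric.eventually_nhds_iff.1 (hgrad hc)
  refine Metric.eventually_nhds_iff.2 ⟨ρ, hρ, fun v hv ↦ ?_⟩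
  rw [dist_zero_right] at hv
  have hderiv (t : ℝ) : HasDerivAt
      (fun t : ℝ ↦ f (x + t • v) - t * ⟪∇ f x, v⟫ - t ^ 2 / 2 * ⟪A v, v⟫)
      ⟪∇ f (x + t • v) - ∇ f x - A (t • v), v⟫ t := by
    have hline : HasDerivAt (fun t : ℝ ↦ x + t • v) v t := by
      simpa using ((hasDerivAt_id t).smul_const v).const_add x
    have hquad : HasDerivAt (fun t : ℝ ↦ t ^ 2 / 2 * ⟪A v, v⟫) (t * ⟪A v, v⟫) t := by
      simpa using ((hasDerivAt_pow 2 t).div_const 2).mul_const ⟪A v, v⟫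
    refine ((((hf _).hasGradientAt.hasFDerivAt.comp_hasDerivAt t hline).sub
      (hasDerivAt_mul_const ⟪∇ f x, v⟫)).sub hquad).congr_deriv ?_
    simp [inner_sub_left, inner_smul_left]
  have hmean := norm_image_sub_le_of_norm_deriv_le_segment_01' (C := c * ‖v‖ * ‖v‖)
    (fun t _ ↦ (hderiv t).hasDerivWithinAt) fun t ht ↦ by
      have htv : ‖t • v‖ ≤ ‖v‖ := by
        rw [norm_smul, norm_of_nonneg ht.1]
        exact mul_le_of_le_one_left (norm_nonneg v) ht.2.le
      have hgrad_t : ‖∇ f (x + t • v) - ∇ f x - A (t • v)‖ ≤ c * ‖t • v‖ :=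
        hball (by simpa using htv.trans_lt hv)
      exact (norm_inner_le_norm _ _).trans (by gcongr; exact hgrad_t.trans (by gcongr))
  convert hmean using 1
  · congr 1
    simp
    ring
  · simp
    ring

/-- The error of the trapezoidal rule for the increment of `f` from `x` to `x + v`. -/
def trapezoidError (f : E → ℝ) (x v : E) : ℝ :=
  f (x + v) - f x - ⟪∇ f x + ∇ f (x + v), v⟫ / 2

lemma isLittleO_trapezoidError {x : E} (hf : Differentiable ℝ f)
    (hx : DifferentiableAt ℝ (∇ f) x) : trapezoidError f x =o[𝓝 0] fun v ↦ ‖v‖ ^ 2 := by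
  have htaylor := isLittleO_sub_inner_gradient_sub_half_inner hf hx.hasFDerivAt
  have hgrad := hasFDerivAt_iff_isLittleO_nhds_zero.1 hx.hasFDerivAt
  have hinner : (fun v ↦ ⟪∇ f (x + v) - ∇ f x - fderiv ℝ (∇ f) x v, v⟫ / 2) =o[𝓝 0]
      fun v ↦ ‖v‖ ^ 2 := by
    have hprod := hgrad.norm_norm.mul_isBigO (isBigO_refl (fun v : E ↦ ‖v‖) (𝓝 0))
    simp only [← sq] at hprod
    refine (IsBigO.of_bound 1 (.of_forall fun v ↦ ?_)).trans_isLittleO hprod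
    rw [one_mul, norm_div, norm_mul, norm_norm, norm_norm, Real.norm_two]
    exact (half_le_self (norm_nonneg _)).trans (norm_inner_le_norm _ _)
  refine (htaylor.sub hinner).congr_left fun v ↦ ?_
  simp only [trapezoidError, inner_sub_left, inner_add_left]
  ring

lemma abs_trapezoidError_le {K : ℝ≥0} (hf : Differentiable ℝ f) (hK : LipschitzWith K (∇ f))
    (x v : E) : |trapezoidError f x v| ≤ 2 * K * ‖v‖ ^ 2 := by
  have hinner : |⟪∇ f (x + v) - ∇ f x, v⟫ / 2| ≤ K * ‖v‖ ^ 2 := by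
    have hsub : ‖∇ f (x + v) - ∇ f x‖ ≤ K * ‖v‖ := by simpa using hK.norm_sub_le (x + v) x
    rw [abs_div, abs_two]
    calc |⟪∇ f (x + v) - ∇ f x, v⟫| / 2 ≤ |⟪∇ f (x + v) - ∇ f x, v⟫| := half_le_self (abs_nonneg _)
      _ ≤ K * ‖v‖ * ‖v‖ := (abs_real_inner_le_norm _ _).trans (by gcongr)
      _ = K * ‖v‖ ^ 2 := by ring
  calc |trapezoidError f x v|
      = |(f (x + v) - f x - ⟪∇ f x, v⟫) - ⟪∇ f (x + v) - ∇ f x, v⟫ / 2| := by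
        rw [trapezoidError, inner_add_left, inner_sub_left]
        ring_nf
    _ ≤ K * ‖v‖ ^ 2 + K * ‖v‖ ^ 2 :=
        (abs_sub _ _).trans (add_le_add (abs_sub_sub_inner_gradient_le hf hK x v) hinner)
    _ = 2 * K * ‖v‖ ^ 2 := by ring

lemma lmcPairEnergy_sub_lmcPairEnergy {η : ℝ} (hη : η ≠ 0) (x v : E) :
    lmcPairEnergy f (∇ f) η (x, x + v) - lmcPairEnergy f (∇ f) η (x + v, x) =
      η / 4 * (‖∇ f x‖ ^ 2 - ‖∇ f (x + v)‖ ^ 2) - trapezoidError f x v := by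
  have hfwd : x + v - x + η • ∇ f x = v + η • ∇ f x := by abel
  have hbwd : x - (x + v) + η • ∇ f (x + v) = η • ∇ f (x + v) - v := by abel
  simp only [lmcPairEnergy, trapezoidError]
  rw [hfwd, hbwd, norm_add_sq_real, norm_sub_sq_real, norm_smul, norm_smul, mul_pow, mul_pow,
    norm_eq_abs, sq_abs, real_inner_smul_left, real_inner_smul_right, inner_add_left,
    real_inner_comm (∇ f x) v]
  field_simp
  ring

end Trapezoid

section AcceptanceRatio

open Filter Topology Asymptotics

variable {E : Type*} [NormedAddCommGroup E] [InnerProductSpace ℝ E] {f : E → ℝ} {b : E → E}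
  {m L η : ℝ}

lemma norm_lmcStep_sub_sq_le (hb : IsContractiveDrift m L b) (hη : 0 ≤ η) (x ξ : E) :
    ‖lmcStep b η (x, ξ) - x‖ ^ 2 ≤ 2 * η ^ 2 * L ^ 2 * ‖x‖ ^ 2 + 4 * η * ‖ξ‖ ^ 2 := by
  have hbx : ‖b x‖ ≤ L * ‖x‖ := by simpa [hb.map_zero] using hb.norm_sub_le x 0
  have hnorm : ‖lmcStep b η (x, ξ) - x‖ ≤ η * (L * ‖x‖) + √(2 * η) * ‖ξ‖ := by
    have hsub : lmcStep b η (x, ξ) - x = √(2 * η) • ξ - η • b x := by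
      simp only [lmcStep]
      abel
    rw [hsub, add_comm]
    refine (norm_sub_le _ _).trans ?_
    rw [norm_smul, norm_smul, norm_of_nonneg hη, norm_of_nonneg (sqrt_nonneg _)]
    gcongr
  calc ‖lmcStep b η (x, ξ) - x‖ ^ 2 ≤ (η * (L * ‖x‖) + √(2 * η) * ‖ξ‖) ^ 2 := by gcongr
    _ ≤ 2 * ((η * (L * ‖x‖)) ^ 2 + (√(2 * η) * ‖ξ‖) ^ 2) := add_sq_le
    _ = _ := by
      rw [mul_pow √(2 * η), sq_sqrt (by positivity)]
      ring

lemma norm_lmcStep_sub_sq_le_of_le (hb : IsContractiveDrift m L b) (hη : 0 ≤ η) (hηL : η * L ≤ 1)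
    (x ξ : E) : ‖lmcStep b η (x, ξ) - x‖ ^ 2 ≤ η * (2 * L * ‖x‖ ^ 2 + 4 * ‖ξ‖ ^ 2) := by
  have hL := hb.lipschitz_pos
  calc _ ≤ 2 * η ^ 2 * L ^ 2 * ‖x‖ ^ 2 + 4 * η * ‖ξ‖ ^ 2 := norm_lmcStep_sub_sq_le hb hη x ξ
    _ = η * L * (2 * η * L * ‖x‖ ^ 2) + 4 * η * ‖ξ‖ ^ 2 := by ring
    _ ≤ 1 * (2 * η * L * ‖x‖ ^ 2) + 4 * η * ‖ξ‖ ^ 2 := by gcongr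
    _ = _ := by ring

/-- The logarithm of the Metropolis acceptance ratio of the LMC move from `p.1` driven by the noise
`p.2`, for the target density `exp (-f)`. -/
def logAcceptanceRatio (f : E → ℝ) (b : E → E) (η : ℝ) (p : E × E) : ℝ :=
  lmcPairEnergy f b η (p.1, lmcStep b η p) - lmcPairEnergy f b η (lmcStep b η p, p.1)

variable [CompleteSpace E]

lemma logAcceptanceRatio_gradient (hη : η ≠ 0) (x ξ : E) :
    logAcceptanceRatio f (∇ f) η (x, ξ) =
      η / 4 * (‖∇ f x‖ ^ 2 - ‖∇ f (lmcStep (∇ f) η (x, ξ))‖ ^ 2) -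
        trapezoidError f x (lmcStep (∇ f) η (x, ξ) - x) := by
  simpa [logAcceptanceRatio] using
    lmcPairEnergy_sub_lmcPairEnergy hη x (lmcStep (∇ f) η (x, ξ) - x)

lemma abs_logAcceptanceRatio_le (hf : Differentiable ℝ f) (hb : IsContractiveDrift m L (∇ f))
    (hη : 0 < η) (hηL : η * L ≤ 1) (x ξ : E) :
    |logAcceptanceRatio f (∇ f) η (x, ξ)| ≤ η * (6 * L ^ 2 * ‖x‖ ^ 2 + 10 * L * ‖ξ‖ ^ 2) := by
  have hL := hb.lipschitz_pos
  have hgrad (z : E) : ‖∇ f z‖ ^ 2 ≤ L ^ 2 * ‖z‖ ^ 2 := by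
    rw [← mul_pow]
    exact pow_le_pow_left₀ (norm_nonneg _) (by simpa [hb.map_zero] using hb.norm_sub_le z 0) 2
  rw [logAcceptanceRatio_gradient hη.ne']
  set y := lmcStep (∇ f) η (x, ξ)
  have htrap : |trapezoidError f x (y - x)| ≤ 2 * L * ‖y - x‖ ^ 2 := by
    simpa [hL.le] using abs_trapezoidError_le hf hb.lipschitzWith x (y - x)
  have hy : ‖y‖ ^ 2 ≤ 2 * (‖x‖ ^ 2 + ‖y - x‖ ^ 2) :=
    (pow_le_pow_left₀ (norm_nonneg _) (norm_le_norm_add_norm_sub' y x) 2).trans add_sq_le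
  have hgrad_sub : |‖∇ f x‖ ^ 2 - ‖∇ f y‖ ^ 2| ≤ 2 * L ^ 2 * (‖x‖ ^ 2 + ‖y - x‖ ^ 2) := by
    have hgx := hgrad x
    have hgy := (hgrad y).trans (mul_le_mul_of_nonneg_left hy (sq_nonneg L))
    refine abs_sub_le_of_nonneg_of_le (sq_nonneg _) ?_ (sq_nonneg _) (by linarith)
    nlinarith [mul_nonneg (sq_nonneg L) (sq_nonneg ‖x‖),
      mul_nonneg (sq_nonneg L) (sq_nonneg ‖y - x‖)]
  have hincr : L * ‖y - x‖ ^ 2 ≤ η * (2 * L ^ 2 * ‖x‖ ^ 2 + 4 * L * ‖ξ‖ ^ 2) :=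
    (mul_le_mul_of_nonneg_left (norm_lmcStep_sub_sq_le_of_le hb hη.le hηL x ξ) hL.le).trans_eq
      (by ring)
  calc _ ≤ |η / 4 * (‖∇ f x‖ ^ 2 - ‖∇ f y‖ ^ 2)| + |trapezoidError f x (y - x)| := abs_sub _ _
    _ ≤ η / 4 * (2 * L ^ 2 * (‖x‖ ^ 2 + ‖y - x‖ ^ 2)) + 2 * L * ‖y - x‖ ^ 2 := by
        rw [abs_mul, abs_of_pos (by positivity : 0 < η / 4)]
        gcongr
    _ = η * (L ^ 2 / 2 * ‖x‖ ^ 2) + (η * L / 2 + 2) * (L * ‖y - x‖ ^ 2) := by ring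
    _ ≤ η * (L ^ 2 / 2 * ‖x‖ ^ 2) +
        (1 / 2 + 2) * (η * (2 * L ^ 2 * ‖x‖ ^ 2 + 4 * L * ‖ξ‖ ^ 2)) := by gcongr
    _ ≤ _ := by nlinarith [mul_nonneg hη.le (mul_nonneg (sq_nonneg L) (sq_nonneg ‖x‖))]

lemma tendsto_logAcceptanceRatio_div (hf : Differentiable ℝ f) (hf' : Differentiable ℝ (∇ f))
    (hb : IsContractiveDrift m L (∇ f)) (p : E × E) :
    Tendsto (fun η ↦ |logAcceptanceRatio f (∇ f) η p| / η) (𝓝[>] 0) (𝓝 0) := by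
  obtain ⟨x, ξ⟩ := p
  have hstep : Tendsto (fun η ↦ lmcStep (∇ f) η (x, ξ)) (𝓝[>] 0) (𝓝 x) := by
    have hcont : Continuous fun η : ℝ ↦ lmcStep (∇ f) η (x, ξ) := by
      unfold lmcStep
      fun_prop
    simpa [lmcStep] using (hcont.tendsto 0).mono_left nhdsWithin_le_nhds
  have hincr : Tendsto (fun η ↦ lmcStep (∇ f) η (x, ξ) - x) (𝓝[>] 0) (𝓝 0) :=
    tendsto_sub_nhds_zero_iff.2 hstep
  have hincr_sq : (fun η ↦ ‖lmcStep (∇ f) η (x, ξ) - x‖ ^ 2) =O[𝓝[>] 0] fun η ↦ η := by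
    refine .of_bound (2 * L ^ 2 * ‖x‖ ^ 2 + 4 * ‖ξ‖ ^ 2) ?_
    filter_upwards [Ioc_mem_nhdsGT one_pos] with η hη
    rw [norm_of_nonneg (sq_nonneg _), norm_of_nonneg hη.1.le]
    refine (norm_lmcStep_sub_sq_le hb hη.1.le x ξ).trans ?_
    have hη_sq : η ^ 2 ≤ η := by nlinarith [hη.1, hη.2]
    nlinarith [mul_le_mul_of_nonneg_right hη_sq (mul_nonneg (sq_nonneg L) (sq_nonneg ‖x‖))]
  have htrap := ((isLittleO_trapezoidError hf (hf' x)).comp_tendsto hincr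
    |>.trans_isBigO hincr_sq).tendsto_div_nhds_zero
  have hgrad : Tendsto (fun η ↦ 1 / 4 * (‖∇ f x‖ ^ 2 - ‖∇ f (lmcStep (∇ f) η (x, ξ))‖ ^ 2))
      (𝓝[>] 0) (𝓝 0) := by
    have hcont : Continuous fun y ↦ 1 / 4 * (‖∇ f x‖ ^ 2 - ‖∇ f y‖ ^ 2) := by
      have := hf'.continuous
      fun_prop
    simpa [Function.comp_def] using (hcont.tendsto x).comp hstep
  have hsub := (hgrad.sub htrap).abs
  rw [sub_zero, abs_zero] at hsub
  refine hsub.congr' ?_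
  filter_upwards [self_mem_nhdsWithin] with η (hη : 0 < η)
  rw [logAcceptanceRatio_gradient hη.ne', ← abs_of_pos hη, ← abs_div, abs_of_pos hη]
  congr 1
  simp only [Function.comp_apply]
  field_simp

end AcceptanceRatio

section MetropolisCost

open Filter Topology

variable {E : Type*} [NormedAddCommGroup E] [InnerProductSpace ℝ E] {f : E → ℝ} {b : E → E}
  {m L η : ℝ}

/-- A bound on the probability that the LMC move from `p.1` with noise `p.2` is rejected, times the
squared length of that move. -/
def metropolisCost (f : E → ℝ) (b : E → E) (η : ℝ) (p : E × E) : ℝ :=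
  min 1 |logAcceptanceRatio f b η p| * ‖lmcStep b η p - p.1‖ ^ 2

lemma metropolisCost_nonneg (p : E × E) : 0 ≤ metropolisCost f b η p := by
  unfold metropolisCost
  positivity

lemma continuous_metropolisCost (hf : Continuous f) (hb : Continuous b) :
    Continuous (metropolisCost f b η) := by
  have hstep := continuous_lmcStep hb η
  unfold metropolisCost logAcceptanceRatio lmcPairEnergy
  fun_prop

variable [CompleteSpace E]

lemma metropolisCost_div_sq_le (hf : Differentiable ℝ f) (hb : IsContractiveDrift m L (∇ f))
    (hη : 0 < η) (hηL : η * L ≤ 1) (x ξ : E) :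
    metropolisCost f (∇ f) η (x, ξ) / η ^ 2 ≤
      2 * L ^ 2 * ‖x‖ ^ 2 + (24 * L ^ 2 * (‖x‖ ^ 2 * ‖ξ‖ ^ 2) + 40 * L * ‖ξ‖ ^ 4) := by
  rw [div_le_iff₀ (by positivity), metropolisCost]
  set q := min 1 |logAcceptanceRatio f (∇ f) η (x, ξ)|
  have hq : q ≤ η * (6 * L ^ 2 * ‖x‖ ^ 2 + 10 * L * ‖ξ‖ ^ 2) :=
    (min_le_right _ _).trans (abs_logAcceptanceRatio_le hf hb hη hηL x ξ)
  calc q * ‖lmcStep (∇ f) η (x, ξ) - x‖ ^ 2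
      ≤ q * (2 * η ^ 2 * L ^ 2 * ‖x‖ ^ 2 + 4 * η * ‖ξ‖ ^ 2) := by
        gcongr
        exact norm_lmcStep_sub_sq_le hb hη.le x ξ
    _ = q * (2 * η ^ 2 * L ^ 2 * ‖x‖ ^ 2) + q * (4 * η * ‖ξ‖ ^ 2) := mul_add _ _ _
    _ ≤ 1 * (2 * η ^ 2 * L ^ 2 * ‖x‖ ^ 2) +
        η * (6 * L ^ 2 * ‖x‖ ^ 2 + 10 * L * ‖ξ‖ ^ 2) * (4 * η * ‖ξ‖ ^ 2) := by
        gcongr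
        exact min_le_left _ _
    _ = _ := by ring

lemma eventually_nhdsGT_mul_le_one (L : ℝ) : ∀ᶠ η in 𝓝[>] (0 : ℝ), η * L ≤ 1 := by
  have hlim : Tendsto (fun η : ℝ ↦ η * L) (𝓝[>] 0) (𝓝 0) := by
    simpa using (tendsto_id.mono_left (nhdsWithin_le_nhds (a := (0 : ℝ)))).mul_const L
  exact hlim.eventually (eventually_le_nhds one_pos)

lemma tendsto_metropolisCost_div_sq (hf : Differentiable ℝ f) (hf' : Differentiable ℝ (∇ f))
    (hb : IsContractiveDrift m L (∇ f)) (p : E × E) :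
    Tendsto (fun η ↦ metropolisCost f (∇ f) η p / η ^ 2) (𝓝[>] 0) (𝓝 0) := by
  have hratio := (tendsto_logAcceptanceRatio_div hf hf' hb p).mul_const
    (2 * L * ‖p.1‖ ^ 2 + 4 * ‖p.2‖ ^ 2)
  rw [zero_mul] at hratio
  refine squeeze_zero' (.of_forall fun η ↦ div_nonneg (metropolisCost_nonneg p) (sq_nonneg η)) ?_
    hratio
  filter_upwards [self_mem_nhdsWithin, eventually_nhdsGT_mul_le_one L] with η (hη : 0 < η) hηL
  calc metropolisCost f (∇ f) η p / η ^ 2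
      ≤ |logAcceptanceRatio f (∇ f) η p| * (η * (2 * L * ‖p.1‖ ^ 2 + 4 * ‖p.2‖ ^ 2)) / η ^ 2 := by
        unfold metropolisCost
        gcongr
        · exact min_le_right _ _
        · exact norm_lmcStep_sub_sq_le_of_le hb hη.le hηL p.1 p.2
    _ = _ := by field_simp

variable [FiniteDimensional ℝ E] [MeasurableSpace E] [BorelSpace E] {μ : Measure E}
  [IsProbabilityMeasure μ]

lemma tendsto_lintegral_metropolisCost_div_sq (hf : Differentiable ℝ f)
    (hf' : Differentiable ℝ (∇ f)) (hb : IsContractiveDrift m L (∇ f)) (hμ : MemLp id 2 μ) :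
    Tendsto (fun η ↦ ∫⁻ p, ENNReal.ofReal (metropolisCost f (∇ f) η p / η ^ 2)
      ∂μ.prod (stdGaussian E)) (𝓝[>] 0) (𝓝 0) := by
  have hμ_sq : Integrable (fun x ↦ ‖x‖ ^ 2) μ := hμ.integrable_norm_pow two_ne_zero
  have hξ_sq : Integrable (fun ξ ↦ ‖ξ‖ ^ 2) (stdGaussian E) := integrable_norm_sq_stdGaussian
  have hξ_four : Integrable (fun ξ : E ↦ ‖ξ‖ ^ 4) (stdGaussian E) :=
    (IsGaussian.memLp_id (stdGaussian E) 4 (by simp)).integrable_norm_pow four_ne_zero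
  have hbound : Integrable (fun p : E × E ↦ 2 * L ^ 2 * ‖p.1‖ ^ 2 +
      (24 * L ^ 2 * (‖p.1‖ ^ 2 * ‖p.2‖ ^ 2) + 40 * L * ‖p.2‖ ^ 4)) (μ.prod (stdGaussian E)) :=
    ((hμ_sq.comp_fst _).const_mul _).add
      (((hμ_sq.mul_prod hξ_sq).const_mul _).add ((hξ_four.comp_snd μ).const_mul _))
  rw [← lintegral_zero (μ := μ.prod (stdGaussian E))]
  refine tendsto_lintegral_filter_of_dominated_convergence _ (.of_forall fun η ↦ ?_) ?_
    hbound.lintegral_lt_top.ne (.of_forall fun p ↦ ?_)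
  · have hcost := continuous_metropolisCost (η := η) hf.continuous hf'.continuous
    fun_prop
  · filter_upwards [self_mem_nhdsWithin, eventually_nhdsGT_mul_le_one L] with η (hη : 0 < η) hηL
    exact .of_forall fun p ↦
      ENNReal.ofReal_le_ofReal (metropolisCost_div_sq_le hf hb hη hηL p.1 p.2)
  · simpa using ENNReal.tendsto_ofReal (tendsto_metropolisCost_div_sq hf hf' hb p)

theorem eventually_coupledWithin_lmcTransition_of_gibbs (hf : Differentiable ℝ f)
    (hf' : Differentiable ℝ (∇ f)) (hb : IsContractiveDrift m L (∇ f)) {c : ℝ≥0∞}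
    (hμ : μ = c • volume.withDensity fun x ↦ ENNReal.ofReal (exp (-f x))) (hμ₂ : MemLp id 2 μ)
    {δ : ℝ} (hδ : 0 < δ) :
    ∀ᶠ η in 𝓝[>] 0, CoupledWithin (lmcTransition (∇ f) η μ) μ (δ * η) := by
  have hsmall := (tendsto_lintegral_metropolisCost_div_sq hf hf' hb hμ₂).eventually_lt_const
    (ENNReal.ofReal_pos.2 (pow_pos hδ 2))
  filter_upwards [self_mem_nhdsWithin, hsmall] with η (hη : 0 < η) hcost
  refine coupledWithin_lmcTransition_of_gibbs hf.continuous hf'.continuous hη hμ (by positivity) ?_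
  have hscale (p : E × E) : ENNReal.ofReal (min 1 |lmcPairEnergy f (∇ f) η
        (p.1, lmcStep (∇ f) η p) - lmcPairEnergy f (∇ f) η (lmcStep (∇ f) η p, p.1)|) *
      ‖lmcStep (∇ f) η p - p.1‖ₑ ^ 2 =
      ENNReal.ofReal (η ^ 2) * ENNReal.ofReal (metropolisCost f (∇ f) η p / η ^ 2) := by
    rw [← ofReal_norm_sq, ← ENNReal.ofReal_mul (by positivity),
      ← ENNReal.ofReal_mul (by positivity), mul_div_cancel₀ _ (by positivity)]
    rfl
  simp only [hscale]
  rw [lintegral_const_mul' _ _ ENNReal.ofReal_ne_top, mul_pow, mul_comm (δ ^ 2),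
    ENNReal.ofReal_mul (by positivity)]
  gcongr

end MetropolisCost

/-! ### The discretization bias -/

section HalvingBudget

variable {m L G h S D α B V : ℝ}

lemma halving_mean_error_le (h0 : 0 ≤ h) (hmh : m * h ≤ 1 / 4) (hG : 0 ≤ G) (hS : 1 ≤ S)
    (hD : 2 * D ≤ m * S ^ 2) (hα : 3 * (L ^ 2 + G) * S ≤ m * α) :
    h ^ 2 * G * (1 + √(2 * h) * √D) + h ^ 2 * (G + L ^ 2) * S ≤ h ^ 2 * (m * α) := by
  have hnoise : √(2 * h) * √D ≤ S / 2 := by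
    rw [← sqrt_mul (by positivity)]
    refine Real.sqrt_le_iff.2 ⟨by linarith, ?_⟩
    nlinarith [mul_le_mul_of_nonneg_left hD h0, mul_le_mul_of_nonneg_right hmh (sq_nonneg S)]
  calc h ^ 2 * G * (1 + √(2 * h) * √D) + h ^ 2 * (G + L ^ 2) * S
      ≤ h ^ 2 * G * (S + S / 2) + h ^ 2 * (G + L ^ 2) * S := by gcongr
    _ ≤ h ^ 2 * (3 * (L ^ 2 + G) * S) := by
      have hSL : 0 ≤ L ^ 2 * S := by positivity
      have hSG : 0 ≤ G * S := by positivity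
      nlinarith [mul_nonneg (sq_nonneg h) hSL, mul_nonneg (sq_nonneg h) hSG]
    _ ≤ h ^ 2 * (m * α) := by gcongr

lemma halving_fluctuation_le (hm : 0 < m) (hmL : m ≤ L) (h0 : 0 ≤ h) (hhL : h * L ^ 2 ≤ m)
    (hG : 0 ≤ G) (hS : 0 ≤ S) (hD : 2 * D ≤ m * S ^ 2) (hα : 3 * (L ^ 2 + G) * S ≤ m * α) :
    h ^ 4 * L ^ 4 * S ^ 2 + 2 * h ^ 3 * L ^ 2 * D ≤ h ^ 3 * (m * α ^ 2) := by
  have hLα : 3 * L * S ≤ α := by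
    refine le_of_mul_le_mul_left ?_ hm
    calc m * (3 * L * S) ≤ L * (3 * L * S) := by gcongr; nlinarith
      _ ≤ 3 * (L ^ 2 + G) * S := by nlinarith [mul_nonneg hG hS]
      _ ≤ m * α := hα
  calc h ^ 4 * L ^ 4 * S ^ 2 + 2 * h ^ 3 * L ^ 2 * D
      = h ^ 3 * L ^ 2 * (h * L ^ 2 * S ^ 2 + 2 * D) := by ring
    _ ≤ h ^ 3 * L ^ 2 * (m * S ^ 2 + m * S ^ 2) := by gcongr
    _ ≤ h ^ 3 * (m * (3 * L * S) ^ 2) := by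
      nlinarith [mul_nonneg (pow_nonneg h0 3) (mul_nonneg hm.le (sq_nonneg (L * S)))]
    _ ≤ h ^ 3 * (m * α ^ 2) := by
      have : 0 ≤ L := hm.le.trans hmL
      gcongr

lemma sqrt_contraction_add_le (h0 : 0 ≤ h) (hm : 0 ≤ m) (hmh : m * h ≤ 1 / 4) (hα : 0 ≤ α)
    (hB0 : 0 ≤ B) (hB : B ≤ h ^ 2 * (m * α)) (hV : V ≤ h ^ 3 * (m * α ^ 2)) :
    √(((1 - m * (2 * h)) * (α * h) + B) ^ 2 + V) ≤ α * h := by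
  refine Real.sqrt_le_iff.2 ⟨by positivity, ?_⟩
  have hcontr : (1 - m * (2 * h)) * (α * h) + B ≤ (1 - m * h) * (α * h) := by linarith
  have hnonneg : 0 ≤ (1 - m * (2 * h)) * (α * h) + B :=
    add_nonneg (mul_nonneg (by linarith) (by positivity)) hB0
  calc ((1 - m * (2 * h)) * (α * h) + B) ^ 2 + V
      ≤ ((1 - m * h) * (α * h)) ^ 2 + h ^ 3 * (m * α ^ 2) := by gcongr
    _ = (1 - m * h * (1 - m * h)) * (α * h) ^ 2 := by ring
    _ ≤ 1 * (α * h) ^ 2 := by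
      gcongr
      nlinarith [mul_nonneg hm h0]
    _ = (α * h) ^ 2 := one_mul _

end HalvingBudget

section Iteration

open Filter Topology

variable {E : Type*} [NormedAddCommGroup E] [InnerProductSpace ℝ E] {b : E → E}
  {m L G h S α : ℝ}

lemma IsContractiveDrift.mul_le_quarter (hb : IsContractiveDrift m L b)
    (hh : h * (4 * L ^ 2) ≤ m) : h * L ≤ 1 / 4 := by
  refine le_of_mul_le_mul_right ?_ hb.lipschitz_pos
  linarith [hb.le]

variable [FiniteDimensional ℝ E] [MeasurableSpace E] [BorelSpace E] {μ ν : Measure E}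

lemma isProbabilityMeasure_iterate_lmcTransition (hb : Continuous b) (h : ℝ) (ν : Measure E)
    [IsProbabilityMeasure ν] (k : ℕ) : IsProbabilityMeasure ((lmcTransition b h)^[k] ν) := by
  induction k with
  | zero => assumption
  | succ k ih =>
    rw [Function.iterate_succ_apply']
    exact isProbabilityMeasure_lmcTransition hb h _

lemma eLpNorm_id_iterate_lmcTransition_le [IsProbabilityMeasure ν]
    (hb : IsContractiveDrift m L b) (h0 : 0 ≤ h) (hhL : h * L ≤ 1) (hS0 : 0 ≤ S)
    (hS : 2 * Module.finrank ℝ E ≤ m * S ^ 2) (hν : eLpNorm id 2 ν ≤ ENNReal.ofReal S) (k : ℕ) :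
    eLpNorm id 2 ((lmcTransition b h)^[k] ν) ≤ ENNReal.ofReal S := by
  induction k with
  | zero => exact hν
  | succ k ih =>
    have := isProbabilityMeasure_iterate_lmcTransition hb.lipschitzWith.continuous h ν k
    rw [Function.iterate_succ_apply']
    exact eLpNorm_id_lmcTransition_le hb h0 hhL hS0 hS ih

lemma CoupledWithin.iterate_lmcTransition {a : ℝ} (hc : CoupledWithin μ ν a)
    (hb : IsContractiveDrift m L b) (h0 : 0 ≤ h) (hhL : h * L ≤ 1) (k : ℕ) :
    CoupledWithin ((_root_.lmcTransition b h)^[k] μ) ((_root_.lmcTransition b h)^[k] ν)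
      ((1 - m * h) ^ k * a) := by
  induction k with
  | zero => simpa using hc
  | succ k ih =>
    rw [Function.iterate_succ_apply', Function.iterate_succ_apply', pow_succ', mul_assoc]
    exact ih.lmcTransition hb h0 hhL

lemma CoupledWithin.iterate_lmcTransition_left {δ : ℝ}
    (hc : CoupledWithin (_root_.lmcTransition b h μ) μ (δ * h)) (hb : IsContractiveDrift m L b)
    (h0 : 0 ≤ h) (hhL : h * L ≤ 1) (hδ : 0 ≤ δ) (k : ℕ) :
    CoupledWithin ((_root_.lmcTransition b h)^[k] μ) μ (δ / m) := by
  have := hc.isProbabilityMeasure_right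
  have hm := hb.pos
  induction k with
  | zero => exact (CoupledWithin.refl μ).mono (by positivity)
  | succ k ih =>
    rw [Function.iterate_succ_apply']
    refine ((ih.lmcTransition hb h0 hhL).trans hc).mono (le_of_eq ?_)
    field_simp
    ring

-- `α h` is a fixed point of the recursion: the contraction `1 - 2 m h` pays for the local error.
lemma coupledWithin_iterate_lmcTransition_halving [IsProbabilityMeasure ν]
    (hb : IsContractiveDrift m L b) (hbias : HasSmoothingBias G b) (h0 : 0 ≤ h)
    (hh : h * (4 * L ^ 2) ≤ m) (hS1 : 1 ≤ S) (hS : 2 * Module.finrank ℝ E ≤ m * S ^ 2)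
    (hα : 3 * (L ^ 2 + G) * S ≤ m * α) (hν : eLpNorm id 2 ν ≤ ENNReal.ofReal S) (k : ℕ) :
    CoupledWithin ((lmcTransition b (2 * h))^[k] ν) ((lmcTransition b h)^[2 * k] ν) (α * h) := by
  have hm := hb.pos
  have hG := hbias.nonneg
  have hS0 : 0 ≤ S := zero_le_one.trans hS1
  have hhL := hb.mul_le_quarter hh
  have hmh : m * h ≤ 1 / 4 := by nlinarith [hb.le]
  have hα0 : 0 ≤ α := nonneg_of_mul_nonneg_right ((by positivity : (0 : ℝ) ≤ _).trans hα) hm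
  induction k with
  | zero => exact (CoupledWithin.refl ν).mono (by positivity)
  | succ k ih =>
    rw [mul_add_one 2 k, Function.iterate_succ_apply', Function.iterate_succ_apply',
      Function.iterate_succ_apply']
    refine (ih.lmcTransition_halving hb hbias h0 (by linarith) hS0
      (eLpNorm_id_iterate_lmcTransition_le hb h0 (by linarith) hS0 hS hν _)).mono ?_
    rw [add_assoc (_ * (α * h))]
    exact sqrt_contraction_add_le h0 hm.le hmh hα0 (by positivity)
      (halving_mean_error_le h0 hmh hG hS1 hS hα)
      (halving_fluctuation_le hm hb.le h0 (by nlinarith [mul_nonneg h0 (sq_nonneg L)]) hG hS0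
        hS hα)

lemma coupledWithin_iterate_lmcTransition_div_two_pow [IsProbabilityMeasure ν]
    (hb : IsContractiveDrift m L b) (hbias : HasSmoothingBias G b) (h0 : 0 ≤ h)
    (hh : h * (4 * L ^ 2) ≤ m) (hS1 : 1 ≤ S) (hS : 2 * Module.finrank ℝ E ≤ m * S ^ 2)
    (hα : 3 * (L ^ 2 + G) * S ≤ m * α) (hν : eLpNorm id 2 ν ≤ ENNReal.ofReal S) (k n : ℕ) :
    CoupledWithin ((lmcTransition b h)^[k] ν) ((lmcTransition b (h / 2 ^ n))^[k * 2 ^ n] ν)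
      (α * h * (1 - 1 / 2 ^ n)) := by
  induction n with
  | zero =>
    have := isProbabilityMeasure_iterate_lmcTransition hb.lipschitzWith.continuous h ν k
    simpa using CoupledWithin.refl ((lmcTransition b h)^[k] ν)
  | succ n ih =>
    have hle : h / 2 ^ (n + 1) ≤ h := div_le_self h0 (one_le_pow₀ one_le_two)
    have hhalf := coupledWithin_iterate_lmcTransition_halving hb hbias
      (h := h / 2 ^ (n + 1)) (by positivity)
      ((mul_le_mul_of_nonneg_right hle (by positivity)).trans hh) hS1 hS hα hν (k * 2 ^ n)
    rw [show 2 * (h / 2 ^ (n + 1)) = h / 2 ^ n by rw [pow_succ]; field_simp,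
      show 2 * (k * 2 ^ n) = k * 2 ^ (n + 1) by ring] at hhalf
    refine (ih.trans hhalf).mono (le_of_eq ?_)
    rw [pow_succ]
    field_simp
    ring

lemma one_sub_mul_div_pow_le_exp {N : ℕ} (hN : N ≠ 0) (k : ℕ) (hmh : m * (h / N) ≤ 1) :
    (1 - m * (h / N)) ^ (k * N) ≤ exp (-(m * h * k)) := by
  calc (1 - m * (h / N)) ^ (k * N) ≤ exp (-(m * (h / N))) ^ (k * N) :=
        pow_le_pow_left₀ (sub_nonneg.2 hmh) (one_sub_le_exp_neg _) _
    _ = exp (-(m * h * k)) := by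
        rw [← exp_nat_mul]
        congr 1
        push_cast
        field_simp

lemma coupledWithin_iterate_lmcTransition_of_refinement [IsProbabilityMeasure ν]
    (hb : IsContractiveDrift m L b) (hbias : HasSmoothingBias G b) (h0 : 0 ≤ h)
    (hh : h * (4 * L ^ 2) ≤ m) (hS1 : 1 ≤ S) (hS : 2 * Module.finrank ℝ E ≤ m * S ^ 2)
    (hα : 3 * (L ^ 2 + G) * S ≤ m * α) (hν : eLpNorm id 2 ν ≤ ENNReal.ofReal S) {a δ : ℝ}
    (hδ : 0 ≤ δ) (hνμ : CoupledWithin ν μ a) {n : ℕ}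
    (hμ : CoupledWithin (lmcTransition b (h / 2 ^ n) μ) μ (δ * (h / 2 ^ n))) (k : ℕ) :
    CoupledWithin ((lmcTransition b h)^[k] ν) μ (α * h + exp (-(m * h * k)) * a + δ / m) := by
  have ha := hνμ.1
  have hη0 : 0 ≤ h / 2 ^ n := by positivity
  have hηL : h / 2 ^ n * L ≤ 1 := by
    have hle : h / 2 ^ n ≤ h := div_le_self h0 (one_le_pow₀ one_le_two)
    nlinarith [hb.mul_le_quarter hh, hb.lipschitz_pos]
  have hrefine := coupledWithin_iterate_lmcTransition_div_two_pow hb hbias h0 hh hS1 hS hα hν k n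
  refine ((hrefine.trans (hνμ.iterate_lmcTransition hb hη0 hηL _)).trans
    (hμ.iterate_lmcTransition_left hb hη0 hηL hδ _)).mono ?_
  have hexp : (1 - m * (h / 2 ^ n)) ^ (k * 2 ^ n) ≤ exp (-(m * h * k)) := by
    have hmη := hb.one_sub_nonneg hη0 hηL
    exact_mod_cast one_sub_mul_div_pow_le_exp (N := 2 ^ n) (by positivity) k
      (by exact_mod_cast sub_nonneg.1 hmη)
  have hα0 : 0 ≤ α * h := by
    have hG := hbias.nonneg
    exact mul_nonneg (nonneg_of_mul_nonneg_right ((by positivity : (0 : ℝ) ≤ _).trans hα) hb.pos) h0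
  have hle : α * h * (1 - 1 / 2 ^ n) ≤ α * h :=
    mul_le_of_le_one_right hα0 (sub_le_self _ (by positivity))
  gcongr

theorem W2_iterate_lmcTransition_gibbs_le {f : E → ℝ} (hf : Differentiable ℝ f)
    (hf' : Differentiable ℝ (∇ f)) (hb : IsContractiveDrift m L (∇ f))
    (hbias : HasSmoothingBias G (∇ f)) (h0 : 0 < h) (hh : h * (4 * L ^ 2) ≤ m) (hS1 : 1 ≤ S)
    (hS : 2 * Module.finrank ℝ E ≤ m * S ^ 2) (hα : 3 * (L ^ 2 + G) * S ≤ m * α)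
    [IsProbabilityMeasure μ] {c : ℝ≥0∞}
    (hμ : μ = c • volume.withDensity fun x ↦ ENNReal.ofReal (exp (-f x))) (hμ₂ : MemLp id 2 μ)
    [IsProbabilityMeasure ν] (hν : eLpNorm id 2 ν ≤ ENNReal.ofReal S) (k : ℕ) :
    W2 ((lmcTransition (∇ f) h)^[k] ν) μ ≤ α * h + exp (-(m * h * k)) * W2 ν μ := by
  have hm := hb.pos
  have hν₂ : MemLp id 2 ν := ⟨by fun_prop, hν.trans_lt ENNReal.ofReal_lt_top⟩
  have hdyadic : Tendsto (fun n : ℕ ↦ h / 2 ^ n) atTop (𝓝[>] 0) := by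
    refine tendsto_nhdsWithin_iff.2 ⟨?_, .of_forall fun n ↦ Set.mem_Ioi.2 (by positivity)⟩
    exact tendsto_const_nhds.div_atTop (tendsto_pow_atTop_atTop_of_one_lt one_lt_two)
  have hexp : exp (-(m * h * k)) ≤ 1 := exp_le_one_iff.2 (neg_nonpos.2 (by positivity))
  refine le_of_forall_pos_le_add fun e he ↦ ?_
  set δ := e / (1 + 1 / m) with hδ
  have hδ0 : 0 < δ := by positivity
  obtain ⟨n, hn⟩ := (hdyadic.eventually
    (eventually_coupledWithin_lmcTransition_of_gibbs hf hf' hb hμ hμ₂ hδ0)).exists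
  calc W2 ((lmcTransition (∇ f) h)^[k] ν) μ
      ≤ α * h + exp (-(m * h * k)) * (W2 ν μ + δ) + δ / m :=
        (coupledWithin_iterate_lmcTransition_of_refinement hb hbias h0.le hh hS1 hS hα hν hδ0.le
          (coupledWithin_W2_add hν₂ hμ₂ hδ0) hn k).W2_le
    _ ≤ α * h + exp (-(m * h * k)) * W2 ν μ + (δ + δ / m) := by
        linarith [mul_le_of_le_one_left hδ0.le hexp]
    _ = α * h + exp (-(m * h * k)) * W2 ν μ + e := by
        congr 1
        rw [hδ]
        field_simp

end Iteration

/-! ### Law of the iterates -/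

section RandomRecursion

variable {Ω E : Type*} {mΩ : MeasurableSpace Ω} [MeasurableSpace E] {Φ : E × E → E}
  {Y : Option ℕ → Ω → E} {X : ℕ → Ω → E}

lemma exists_measurable_randomRecursion (hΦ : Measurable Φ) (hX0 : X 0 = Y none)
    (hX : ∀ k, X (k + 1) = fun ω ↦ Φ (X k ω, Y (some (k + 1)) ω)) (k : ℕ) :
    ∃ Ψ : ((Finset.range (k + 1)).insertNone → E) → E,
      Measurable Ψ ∧ X k = fun ω ↦ Ψ fun i ↦ Y i ω := by
  induction k with
  | zero => exact ⟨fun y ↦ y ⟨none, by simp⟩, measurable_pi_apply _, hX0⟩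
  | succ k ih =>
    obtain ⟨Ψ, hΨ, hXΨ⟩ := ih
    have hsub : (Finset.range (k + 1)).insertNone ⊆ (Finset.range (k + 2)).insertNone :=
      Finset.insertNone.monotone (Finset.range_mono (Nat.le_succ _))
    refine ⟨fun y ↦ Φ (Ψ fun i ↦ y ⟨i, hsub i.2⟩, y ⟨some (k + 1), by simp⟩),
      by fun_prop, ?_⟩
    rw [hX, hXΨ]

lemma map_randomRecursion {P : Measure Ω} [IsFiniteMeasure P] {ρ : Measure E}
    (hΦ : Measurable Φ) (hX0 : X 0 = Y none)
    (hX : ∀ k, X (k + 1) = fun ω ↦ Φ (X k ω, Y (some (k + 1)) ω))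
    (hY : ∀ i, AEMeasurable (Y i) P) (hindep : iIndepFun Y P)
    (hρ : ∀ k, P.map (Y (some k)) = ρ) (k : ℕ) :
    P.map (X k) = (fun ν : Measure E ↦ (ν.prod ρ).map Φ)^[k] (P.map (Y none)) := by
  induction k with
  | zero => rw [hX0, Function.iterate_zero, id]
  | succ k ih =>
    obtain ⟨Ψ, hΨ, hXΨ⟩ := exists_measurable_randomRecursion hΦ hX0 hX k
    have hXk : AEMeasurable (X k) P := by
      rw [hXΨ]
      exact hΨ.comp_aemeasurable (aemeasurable_pi_lambda _ fun i ↦ hY i)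
    have hXY : IndepFun (X k) (Y (some (k + 1))) P := by
      have hrestrict := hindep.indepFun_finset₀ (Finset.range (k + 1)).insertNone {some (k + 1)}
        (by simp) hY
      rw [hXΨ]
      exact hrestrict.comp hΨ (measurable_pi_apply ⟨some (k + 1), Finset.mem_singleton_self _⟩)
    rw [Function.iterate_succ_apply', ← ih, ← hρ (k + 1),
      ← (indepFun_iff_map_prod_eq_prod_map_map hXk (hY _)).1 hXY,
      AEMeasurable.map_map_of_aemeasurable hΦ.aemeasurable (hXk.prodMk (hY _)), hX]
    rfl

end RandomRecursion

/-! ### The mixing time -/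

section MixingTime

variable {m L h M ε W : ℝ}

lemma le_one_div_conditionNumber_iff (hm : 0 < m) (hL : 0 < L) :
    h ≤ 1 / (4 * (L / m) * L) ↔ h * (4 * L ^ 2) ≤ m := by
  rw [show 1 / (4 * (L / m) * L) = m / (4 * L ^ 2) by field_simp, le_div_iff₀ (by positivity)]

lemma one_div_le_one_div_conditionNumber (hm : 0 < m) (hL : 0 < L) (hM : 4 * (L / m) ^ 2 ≤ M) :
    1 / (m * M) ≤ 1 / (4 * (L / m) * L) := by
  refine one_div_le_one_div_of_le (by positivity) ?_
  calc 4 * (L / m) * L = m * (4 * (L / m) ^ 2) := by field_simp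
    _ ≤ m * M := by gcongr

/-- The constant `C_LMC` of the paper, for a target on a space of dimension `D` and an initial law
of second moment `V`. -/
def lmcConstant (m L G D V : ℝ) : ℝ :=
  10 * (L ^ 2 + G) / m ^ (3 / 2 : ℝ) * √(2 * D + m * (V + 1))

lemma lmcConstant_eq (hm : 0 < m) (L G D V : ℝ) :
    lmcConstant m L G D V = 10 * (L ^ 2 + G) * √(2 * D / m + V + 1) / m := by
  have hsqrt : √(2 * D + m * (V + 1)) = √m * √(2 * D / m + V + 1) := by
    rw [← sqrt_mul hm.le]
    congr 1
    field_simp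
    ring
  have hpow : m ^ (3 / 2 : ℝ) = m * √m := by
    rw [show (3 / 2 : ℝ) = 1 + 1 / 2 by norm_num, rpow_add hm, rpow_one, ← sqrt_eq_rpow]
  have := sqrt_ne_zero'.2 hm
  rw [lmcConstant, hsqrt, hpow]
  field_simp

lemma exp_one_div_four_le : exp (1 / 4) ≤ 13 / 10 := by
  refine le_of_pow_le_pow_left₀ four_ne_zero (by norm_num) ?_
  rw [← exp_nat_mul]
  norm_num
  linarith [exp_one_lt_d9]

lemma exp_neg_floor_log_div_mul_le (hM : 4 ≤ M) (hε : 0 < ε) (hW : 0 < W) :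
    exp (-(⌊M * log (2 * W / ε)⌋₊ / M)) * W ≤ 13 / 20 * ε := by
  have hfloor : log (2 * W / ε) - 1 / 4 ≤ ⌊M * log (2 * W / ε)⌋₊ / M := by
    rw [le_div_iff₀ (by linarith)]
    linarith [Nat.lt_floor_add_one (M * log (2 * W / ε))]
  calc exp (-(⌊M * log (2 * W / ε)⌋₊ / M)) * W
      ≤ exp (1 / 4 + -log (2 * W / ε)) * W := by
        gcongr
        linarith
    _ = exp (1 / 4) * (ε / 2) := by
        rw [exp_add, exp_neg, exp_log (by positivity)]
        field_simp
    _ ≤ 13 / 10 * (ε / 2) := by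
        gcongr
        exact exp_one_div_four_le
    _ = 13 / 20 * ε := by ring

variable {E : Type*} [NormedAddCommGroup E] [InnerProductSpace ℝ E] [FiniteDimensional ℝ E]
  [MeasurableSpace E] [BorelSpace E] {f : E → ℝ} {G S C : ℝ} {μ ν : Measure E}
  [IsProbabilityMeasure μ] [IsProbabilityMeasure ν] {c : ℝ≥0∞}

theorem exists_W2_iterate_lmcTransition_gibbs_le_of_eLpNorm_le (hf : Differentiable ℝ f)
    (hf' : Differentiable ℝ (∇ f)) (hb : IsContractiveDrift m L (∇ f))
    (hbias : HasSmoothingBias G (∇ f))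
    (hμ : μ = c • volume.withDensity fun x ↦ ENNReal.ofReal (exp (-f x))) (hμ₂ : MemLp id 2 μ)
    (hν : eLpNorm id 2 ν ≤ ENNReal.ofReal S) (hS1 : 1 ≤ S)
    (hS : 2 * Module.finrank ℝ E ≤ m * S ^ 2) (hC : C = 10 * (L ^ 2 + G) * S / m)
    (hM₁ : 4 * (L / m) ^ 2 ≤ M) (hM₂ : 2 * C / (m * ε) ≤ M) (hε : 0 < ε)
    (hW : ε < 2 * W2 ν μ) :
    ∃ k : ℕ, k ≤ M * log (2 * W2 ν μ / ε) ∧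
      W2 ((lmcTransition (∇ f) (1 / (m * M)))^[k] ν) μ ≤ ε := by
  have hm := hb.pos
  have hM : 4 ≤ M := by
    have hκ : 1 ≤ L / m := (one_le_div hm).2 hb.le
    nlinarith
  have hh := one_div_le_one_div_conditionNumber hm hb.lipschitz_pos hM₁
  rw [le_one_div_conditionNumber_iff hm hb.lipschitz_pos] at hh
  have hlog : 0 < log (2 * W2 ν μ / ε) := log_pos ((one_lt_div hε).2 hW)
  refine ⟨⌊M * log (2 * W2 ν μ / ε)⌋₊, Nat.floor_le (by positivity), ?_⟩
  have hbias_le : 3 / 10 * C * (1 / (m * M)) ≤ 3 / 20 * ε := by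
    rw [div_le_iff₀ (by positivity)] at hM₂
    rw [mul_one_div, div_le_iff₀ (by positivity)]
    linarith
  have hbound := W2_iterate_lmcTransition_gibbs_le hf hf' hb hbias (α := 3 / 10 * C)
    (by positivity) hh hS1 hS (by rw [hC]; field_simp; norm_num) hμ hμ₂ hν
    ⌊M * log (2 * W2 ν μ / ε)⌋₊
  have hexponent (k : ℝ) : m * (1 / (m * M)) * k = k / M := by field_simp
  rw [hexponent] at hbound
  linarith [exp_neg_floor_log_div_mul_le hM hε (by linarith : 0 < W2 ν μ)]

theorem exists_W2_iterate_lmcTransition_gibbs_le (hf : Differentiable ℝ f)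
    (hf' : Differentiable ℝ (∇ f)) (hb : IsContractiveDrift m L (∇ f))
    (hbias : HasSmoothingBias G (∇ f))
    (hμ : μ = c • volume.withDensity fun x ↦ ENNReal.ofReal (exp (-f x))) (hμ₂ : MemLp id 2 μ)
    (hν₂ : MemLp id 2 ν) (hε : 0 < ε) (hW : ε < 2 * W2 ν μ) :
    ∃ h : ℝ, 0 < h ∧ h ≤ 1 / (4 * (L / m) * L) ∧
      ∃ k : ℕ,
        k ≤ max (4 * (L / m) ^ 2)
            (2 * lmcConstant m L G (Module.finrank ℝ E) (∫ x, ‖x‖ ^ 2 ∂ν) / (m * ε)) *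
          log (2 * W2 ν μ / ε) ∧
        W2 ((lmcTransition (∇ f) h)^[k] ν) μ ≤ ε := by
  have hm := hb.pos
  have hL := hb.lipschitz_pos
  set V := ∫ x, ‖x‖ ^ 2 ∂ν
  set D : ℝ := (Module.finrank ℝ E : ℝ) with hD
  have hV : 0 ≤ V := integral_nonneg fun x ↦ sq_nonneg ‖x‖
  have hDm : 0 ≤ 2 * D / m := by positivity
  have hS_sq : √(2 * D / m + V + 1) ^ 2 = 2 * D / m + V + 1 := sq_sqrt (by positivity)
  set M := max (4 * (L / m) ^ 2) (2 * lmcConstant m L G D V / (m * ε))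
  have hM : 4 * (L / m) ^ 2 ≤ M := le_max_left _ _
  have hM_pos : 0 < M := lt_of_lt_of_le (by positivity) hM
  refine ⟨1 / (m * M), one_div_pos.2 (mul_pos hm hM_pos),
    one_div_le_one_div_conditionNumber hm hL hM,
    exists_W2_iterate_lmcTransition_gibbs_le_of_eLpNorm_le hf hf' hb hbias hμ hμ₂ ?_
      (one_le_sqrt.2 (by linarith)) ?_ (lmcConstant_eq hm L G D V) hM (le_max_right _ _) hε hW⟩
  · rw [eLpNorm_two_le_ofReal_iff _ _ (sqrt_nonneg _), hS_sq]
    exact (lintegral_enorm_sq_eq_ofReal_integral hν₂).trans_le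
      (ENNReal.ofReal_le_ofReal (show V ≤ _ by linarith))
  · rw [hS_sq, ← hD]
    linarith [mul_nonneg hm.le hV, mul_div_cancel₀ (2 * D) hm.ne']

end MixingTime

section Langevin

variable {d : ℕ} {f : Euc d → ℝ} {m L G : ℝ}

lemma HessianBounds.isContractiveDrift_gradient (hHess : HessianBounds m L f)
    (hf : ContDiff ℝ 2 f) (hm : 0 < m) (hmL : m ≤ L) (h0 : ∇ f 0 = 0) :
    IsContractiveDrift m L (∇ f) where
  pos := hm
  le := hmL
  map_zero := h0
  lipschitzWith := hHess.lipschitzWith_gradient hf hm.le hmL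
  norm_eulerStep_sub_le := hHess.norm_gradientStep_sub_le hf hmL

lemma hasSmoothingBias_gradient {K : ℝ≥0} (hf : ContDiff ℝ 3 f) (hK : LipschitzWith K (∇ f))
    (hG0 : 0 ≤ G) (hG : ∀ x, ‖∇ (lapl f) x‖ ≤ G * (1 + ‖x‖)) : HasSmoothingBias G (∇ f) where
  nonneg := hG0
  norm_gaussianSmoothing_sub_le z _ hs :=
    norm_gaussianSmoothing_gradient_sub_le hf hK (laplacian_eq_lapl f ▸ hG) hG0 z hs

lemma map_eq_iterate_lmcTransition {Ω : Type*} {mΩ : MeasurableSpace Ω} {P : Measure Ω}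
    [IsFiniteMeasure P] {b : Euc d → Euc d} (hb : Continuous b) (h : ℝ) {x0 : Ω → Euc d}
    (hx0 : AEMeasurable x0 P) {ξ : ℕ → Ω → Euc d} (hξmeas : ∀ k, Measurable (ξ k))
    (hξlaw : ∀ k, P.map (ξ k) = stdGaussian d)
    (hindep : iIndepFun (fun i : Option ℕ ↦ i.elim x0 ξ) P) {X : ℕ → Ω → Euc d} (hX0 : X 0 = x0)
    (hX : ∀ k, X (k + 1) = fun ω ↦ X k ω - h • b (X k ω) + √(2 * h) • ξ (k + 1) ω) (k : ℕ) :
    P.map (X k) = (lmcTransition b h)^[k] (P.map x0) := by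
  refine map_randomRecursion (continuous_lmcStep hb h).measurable hX0 hX (fun i ↦ ?_) hindep
    (fun k ↦ (hξlaw k).trans (stdGaussian_eq_stdGaussian_euclideanSpace d)) k
  cases i with
  | none => exact hx0
  | some k => exact (hξmeas k).aemeasurable

end Langevin

/-- **Upper bound of the mixing time of LMC** (Theorem 4).
Let `f ∈ C³` be `m`-strongly convex and `L`-smooth (`0 < m ≤ L`) with `∇f(0) = 0` and
`‖∇(Δf)(x)‖ ≤ G (1 + ‖x‖)` for some `G > 0`, let `μ ∝ exp (-f)` have finite second moment,
and set `C_LMC = (10 (L² + G)/m^{3/2}) √(2d + m (E‖x₀‖² + 1))`.  For any accuracy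
`0 < ε < 2 W₂(Law(x₀), μ)` there is a step size `0 < h ≤ 1/(4κL)` such that the LMC iterates
with step size `h` started from the square-integrable `x₀` reach `W₂(Law(x̄_k), μ) ≤ ε` for
some `k ≤ max {4κ², 2 C_LMC/(m ε)} · log (2 W₂(Law(x₀), μ)/ε)`. -/
theorem lmc_mixing_time_upper_bound
    {d : ℕ} {Ω : Type*} {mΩ : MeasurableSpace Ω} {P : Measure Ω} [IsProbabilityMeasure P]
    {f : Euc d → ℝ} {m L G : ℝ}
    (hm : 0 < m) (hmL : m ≤ L) (hf : ContDiff ℝ 3 f) (hHess : HessianBounds m L f)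
    (hgrad0 : gradient f 0 = 0) (hG : 0 < G)
    (hlapl : ∀ x : Euc d, ‖gradient (lapl f) x‖ ≤ G * (1 + ‖x‖))
    {μ : Measure (Euc d)} (hμ : IsGibbs f μ)
    (hμ2 : (∫⁻ x, (‖x‖₊ : ℝ≥0∞) ^ 2 ∂μ) < ⊤)
    {x0 : Ω → Euc d} (hx0 : MemLp x0 2 P)
    {ξ : ℕ → Ω → Euc d} (hξmeas : ∀ k, Measurable (ξ k))
    (hξlaw : ∀ k, P.map (ξ k) = stdGaussian d)
    (hindep : iIndepFun (fun i : Option ℕ => i.elim x0 ξ) P)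
    {ε : ℝ} (hε0 : 0 < ε) (hε1 : ε < 2 * W2 (P.map x0) μ) :
    ∃ h : ℝ, 0 < h ∧ h ≤ 1 / (4 * (L / m) * L) ∧
      ∀ Xb : ℕ → Ω → Euc d, Xb 0 = x0 →
        (∀ k : ℕ, Xb (k + 1) =
          fun ω => Xb k ω - h • gradient f (Xb k ω) + Real.sqrt (2 * h) • ξ (k + 1) ω) →
        ∃ k : ℕ,
          (k : ℝ) ≤
            max (4 * (L / m) ^ 2)
                (2 * (10 * (L ^ 2 + G) / m ^ ((3:ℝ)/2) *
                  Real.sqrt (2 * d + m * ((∫ ω, ‖x0 ω‖ ^ 2 ∂P) + 1))) / (m * ε)) *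
              Real.log (2 * W2 (P.map x0) μ / ε) ∧
          W2 (P.map (Xb k)) μ ≤ ε := by
  have hb := hHess.isContractiveDrift_gradient (hf.of_le (by norm_num)) hm hmL hgrad0
  have hbias := hasSmoothingBias_gradient hf hb.lipschitzWith hG.le hlapl
  have hf' : ContDiff ℝ 2 (∇ f) := contDiff_gradient hf
  obtain ⟨hμ_prob, c, -, -, hμ_density⟩ := hμ
  have hμ₂ : MemLp id 2 μ := (memLp_two_iff_lintegral_enorm_sq_lt_top (by fun_prop)).2 hμ2
  have hx0_meas : AEMeasurable x0 P := hx0.1.aemeasurable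
  have := Measure.isProbabilityMeasure_map hx0_meas
  have hν₂ : MemLp id 2 (P.map x0) := (memLp_map_measure_iff (by fun_prop) hx0_meas).2 hx0
  have hmoment : ∫ x, ‖x‖ ^ 2 ∂P.map x0 = ∫ ω, ‖x0 ω‖ ^ 2 ∂P :=
    integral_map hx0_meas (by fun_prop)
  obtain ⟨h, hh_pos, hh, k, hk, hkε⟩ := exists_W2_iterate_lmcTransition_gibbs_le
    (hf.differentiable (by norm_num)) (hf'.differentiable (by norm_num)) hb hbias hμ_density hμ₂
    hν₂ hε0 hε1
  rw [hmoment, finrank_euclideanSpace_fin] at hk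
  refine ⟨h, hh_pos, hh, fun Xb hX0 hX ↦ ⟨k, hk, ?_⟩⟩
  rwa [map_eq_iterate_lmcTransition hf'.continuous h hx0_meas hξmeas hξlaw hindep hX0 hX]

end
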